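/- Let Δ⃗=(Δ_1,…,Δ_d) be pairwise disjoint closed intervals and let 𝔅 be any of the Banach spaces L¹(ω_{Δ⃗}), C(Δ⃗), or C¹(Δ⃗). Then ℋ_{Δ⃗} is a bounded compact linear operator on 𝔅 and I − ℋ_{Δ⃗} is invertible on 𝔅; in particular, for every a⃗ ∈ 𝔅 the equation u⃗ = ℋ_{Δ⃗}u⃗ + a⃗ has the unique solution u⃗ = (I − ℋ_{Δ⃗})^{−1}a⃗. Similarly, for intervals Δ*_i⊆Δ_i, the operator ℋ_{Δ⃗*,Δ⃗} is a bounded compact linear operator on C(Δ⃗) and on C¹(Δ⃗), and I − ℋ_{Δ⃗*,Δ⃗} is invertible there. -/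

import Mathlib

open MeasureTheory Set Filter Topology Polynomial

noncomputable section

/-- The arcsine distribution `dω_[a,b](x) = dx/(π √((x−a)(b−x)))` on `[a,b]`. -/
def arcsineMeasure (a b : ℝ) : Measure ℝ :=
  (volume.restrict (Set.Icc a b)).withDensity
    fun x => ENNReal.ofReal (1 / (Real.pi * Real.sqrt ((x - a) * (b - x))))

/-- The branch of `√((z−a)(z−b))` holomorphic off `[a,b]` with `w(z) = z + O(1)` at `∞`. -/
def wBranch (a b : ℝ) (z : ℂ) : ℂ :=
  (z - a) * Complex.exp ((1 / 2 : ℂ) * Complex.log ((z - b) / (z - a)))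

/-- Cauchy transform `∫ u(x)/(z−x) dω_[a,b](x)`. -/
def cauchyT (a b : ℝ) (u : ℝ → ℝ) (z : ℂ) : ℂ :=
  ∫ x, (u x : ℂ) / (z - (x : ℂ)) ∂(arcsineMeasure a b)

/-- `H_Δ u`, the harmonic extension of `u` off `Δ = [a,b]`. -/
def harmExt (a b : ℝ) (u : ℝ → ℝ) (z : ℂ) : ℝ :=
  (wBranch a b z * cauchyT a b u z).re

/-- The outer function `Ω_Δ(f,z) := exp( w_Δ(z) ∫ log f(x)/(z−x) dω_Δ(x) )`. -/
def OmegaFun (a b : ℝ) (f : ℝ → ℝ) (z : ℂ) : ℂ :=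
  Complex.exp (wBranch a b z * cauchyT a b (fun x => Real.log (f x)) z)

/-- The value of `Ω_Δ(f,·)` at infinity: `exp( ∫ log f dω_Δ )`. -/
def OmegaInf (a b : ℝ) (f : ℝ → ℝ) : ℝ :=
  Real.exp (∫ x, Real.log (f x) ∂(arcsineMeasure a b))

/-- Radon–Nikodym derivative `μ′` of `μ` with respect to Lebesgue measure. -/
def lebDeriv (μ : Measure ℝ) (x : ℝ) : ℝ := (μ.rnDeriv volume x).toReal

/-- `v_Δ(x) = π μ′(x) √((x−a)(b−x))`, the density of `μ|_Δ` w.r.t. the arcsine law. -/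
def vDens (μ : Measure ℝ) (a b : ℝ) (x : ℝ) : ℝ :=
  Real.pi * lebDeriv μ x * Real.sqrt ((x - a) * (b - x))

/-- Szegő function `G(e^h μ|_[a,b], z)`. -/
def szegoG (μ : Measure ℝ) (a b : ℝ) (h : ℝ → ℝ) (z : ℂ) : ℂ :=
  OmegaFun a b (fun x => Real.sqrt (Real.exp (h x) * vDens μ a b x)) z

/-- Szegő function `G(e^h μ|_[a,b], ·)` at infinity. -/
def szegoGInf (μ : Measure ℝ) (a b : ℝ) (h : ℝ → ℝ) : ℝ :=
  OmegaInf a b fun x => Real.sqrt (Real.exp (h x) * vDens μ a b x)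

/-- Support of a measure on `ℝ`. -/
def msupp (μ : Measure ℝ) : Set ℝ := {x | ∀ ε > 0, 0 < μ (Metric.ball x ε)}

def suppInf (μ : Measure ℝ) : ℝ := sInf (msupp μ)
def suppSup (μ : Measure ℝ) : ℝ := sSup (msupp μ)

/-- `Δ(μ)`, the convex hull of the support of `μ`. -/
def convHullSupp (μ : Measure ℝ) : Set ℝ := Set.Icc (suppInf μ) (suppSup μ)

/-- Logarithmic potential `V^ω(x) = −∫ log|x−t| dω(t)`. -/
def logPot (ω : Measure ℝ) (x : ℝ) : ℝ := -∫ t, Real.log |x - t| ∂ω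

/-- The Szegő condition `μ ∈ Sz([a,b])`. -/
def SzCond (μ : Measure ℝ) (a b : ℝ) : Prop :=
  Integrable (fun x => Real.log (lebDeriv μ x)) (arcsineMeasure a b)

/-- The increasing affine map of `[a,b]` onto `[c,d]`. -/
def affIcc (a b c d : ℝ) (x : ℝ) : ℝ := c + ((d - c) / (b - a)) * (x - a)

/-- The uniform Szegő condition `μ ∈ USz([a,b])`. -/
def USzCond (μ : Measure ℝ) (a b : ℝ) : Prop :=
  SzCond μ a b ∧
  ∀ A B : ℕ → ℝ, (∀ n, A n < B n) → (∀ n, Set.Icc (A n) (B n) ⊆ convHullSupp μ) →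
    Tendsto A atTop (𝓝 a) → Tendsto B atTop (𝓝 b) →
    (∀ᶠ n in atTop, SzCond μ (A n) (B n)) ∧
    Tendsto (fun n => ∫ x,
        |Real.log (lebDeriv μ x) - Real.log (lebDeriv μ (affIcc a b (A n) (B n) x))|
          ∂(arcsineMeasure a b)) atTop (𝓝 0)

/-- `P` is the `n`-th monic orthogonal polynomial with respect to `ν`. -/
def IsMonicOP (ν : Measure ℝ) (n : ℕ) (P : Polynomial ℝ) : Prop :=
  P.Monic ∧ P.natDegree = n ∧ ∀ k < n, ∫ x, x ^ k * P.eval x ∂ν = 0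

/-- The weighted measure `e^θ μ`. -/
def expWt (μ : Measure ℝ) (θ : ℝ → ℝ) : Measure ℝ :=
  μ.withDensity fun x => ENNReal.ofReal (Real.exp (θ x))

/-- An Angelesco system of `d` measures, with `Δ(μ_i) = [lo i, hi i]`. -/
structure Angelesco (d : ℕ) (μ : Fin d → Measure ℝ) (lo hi : Fin d → ℝ) : Prop where
  two_le : 2 ≤ d
  bounded : ∀ i, Bornology.IsBounded (msupp (μ i))
  infinite : ∀ i, (msupp (μ i)).Infinite
  lo_eq : ∀ i, lo i = suppInf (μ i)
  hi_eq : ∀ i, hi i = suppSup (μ i)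
  sep : ∀ i j, i < j → hi i < lo j

/-- The vector equilibrium measure `(ω_1,…,ω_d)` with parameter `c`,
with `supp ω_i = [A i, B i] ⊆ [lo i, hi i]` and masses `c i`. -/
structure VecEquil (d : ℕ) (lo hi : Fin d → ℝ) (c : Fin d → ℝ)
    (ω : Fin d → Measure ℝ) (A B : Fin d → ℝ) : Prop where
  endpoints : ∀ i, lo i ≤ A i ∧ A i < B i ∧ B i ≤ hi i
  supp : ∀ i, msupp (ω i) = Set.Icc (A i) (B i)
  mass : ∀ i, ω i Set.univ = ENNReal.ofReal (c i)
  equil : ∀ j, ∃ ℓ : ℝ,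
    (∀ x ∈ Set.Icc (A j) (B j), logPot (ω j) x + ∑ i, logPot (ω i) x = ℓ) ∧
    (∀ x ∈ Set.Icc (lo j) (hi j) \ Set.Icc (A j) (B j),
        ℓ < logPot (ω j) x + ∑ i, logPot (ω i) x)

/-- The vector `(S_1,…,S_d)` of conjugate-symmetric outer functions in `H²(D_{Δ_i})`,
positive at infinity, with boundary moduli `g_i` satisfying
`|S_{i±}|² ∏_{j≠i} S_j = v_i` a.e. on `Δ_i` (outer functions positive at infinity are
recovered from their boundary moduli by `S_i = Ω_{Δ_i}(g_i, ·)`). -/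
def IsSzegoVector (d : ℕ) (A B : Fin d → ℝ) (v : Fin d → ℝ → ℝ)
    (g : Fin d → ℝ → ℝ) (S : Fin d → ℂ → ℂ) : Prop :=
  (∀ i x, 0 ≤ g i x) ∧
  (∀ i, Integrable (fun x => Real.log (g i x)) (arcsineMeasure (A i) (B i))) ∧
  (∀ i, S i = fun z => OmegaFun (A i) (B i) (g i) z) ∧
  (∀ i, ∀ᵐ x ∂(arcsineMeasure (A i) (B i)),
    (g i x) ^ 2 * ∏ j ∈ Finset.univ.erase i, (S j (x : ℂ)).re = v i x)

/-- The operator `ℋ` with component `i` equal to `−(1/2) Σ_{j≠i} H_{[A j, B j]} u_j`. -/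
def calH (d : ℕ) (A B : Fin d → ℝ) (u : Fin d → ℝ → ℝ) (i : Fin d) (x : ℝ) : ℝ :=
  -(1 / 2) * ∑ j ∈ Finset.univ.erase i, harmExt (A j) (B j) (u j) (x : ℂ)

/-- sup norm over `[a,b]`. -/
def supIcc (a b : ℝ) (f : ℝ → ℝ) : ℝ := sSup ((fun x => |f x|) '' Set.Icc a b)

/-- Norm of `C(Δ⃗)`. -/
def vecCNorm (d : ℕ) (A B : Fin d → ℝ) (u : Fin d → ℝ → ℝ) : ℝ :=
  ∑ i, supIcc (A i) (B i) (u i)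

/-- Norm of `C¹(Δ⃗)`. -/
def vecC1Norm (d : ℕ) (A B : Fin d → ℝ) (u : Fin d → ℝ → ℝ) : ℝ :=
  ∑ i, (supIcc (A i) (B i) (u i) +
    supIcc (A i) (B i) (derivWithin (u i) (Set.Icc (A i) (B i))))

/-- membership in `C(Δ⃗)`. -/
def memVecC (d : ℕ) (A B : Fin d → ℝ) (u : Fin d → ℝ → ℝ) : Prop :=
  ∀ i, ContinuousOn (u i) (Set.Icc (A i) (B i))

/-- membership in `C¹(Δ⃗)`. -/
def memVecC1 (d : ℕ) (A B : Fin d → ℝ) (u : Fin d → ℝ → ℝ) : Prop :=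
  ∀ i, ContDiffOn ℝ 1 (u i) (Set.Icc (A i) (B i))

/-- `|w_Δ(x)|` for real `x`. -/
def wAbs (p q x : ℝ) : ℝ := Real.sqrt |(x - p) * (x - q)|

/-- Riemann–Liouville type fractional integral of order 1/2. -/
def fracInt (γ : ℝ) (θ : ℝ → ℝ) (x : ℝ) : ℝ :=
  (Real.sqrt Real.pi)⁻¹ * ∫ t in γ..x, θ t / Real.sqrt |x - t|


/-- Bundled claims for Lemma 3.6 on a Banach space of vector functions with membership
predicate `mem` and norm `nrm`: the operator `ℋ` (built from the intervals `[A' i, B' i]`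
and evaluated on `[A i, B i]`) is bounded, compact, and `I − ℋ` is invertible, i.e. for
every `a` the equation `u = ℋu + a` is uniquely solvable. -/
def OpGoodOn (d : ℕ) (A' B' A B : Fin d → ℝ)
    (mem : (Fin d → ℝ → ℝ) → Prop) (nrm : (Fin d → ℝ → ℝ) → ℝ) : Prop :=
  -- boundedness
  (∃ M : ℝ, ∀ u, mem u → nrm (fun i x => calH d A' B' u i x) ≤ M * nrm u) ∧
  -- compactness
  (∀ u : ℕ → Fin d → ℝ → ℝ, (∀ n, mem (u n)) → (∀ n, nrm (u n) ≤ 1) →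
    ∃ φ : ℕ → ℕ, StrictMono φ ∧ ∃ v : Fin d → ℝ → ℝ, mem v ∧
      Tendsto (fun n => nrm fun i x => calH d A' B' (u (φ n)) i x - v i x) atTop (𝓝 0)) ∧
  -- invertibility of `I − ℋ`
  (∀ a, mem a → ∃ u, mem u ∧
    (∀ i, ∀ x ∈ Set.Icc (A i) (B i), u i x = calH d A' B' u i x + a i x) ∧
    ∀ u', mem u' →
      (∀ i, ∀ x ∈ Set.Icc (A i) (B i), u' i x = calH d A' B' u' i x + a i x) →
      ∀ i, ∀ x ∈ Set.Icc (A i) (B i), u' i x = u i x)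

/-!
Write `f_k` for the holomorphic function `w_{Δ_k}(z) ∫ u_k(x)/(z−x) dω_{Δ_k}(x)`, whose real part
is `H_{Δ_k} u_k`.

Compactness: `(ℋu⃗)_i` is the real part of `−(1/2) ∑_{j≠i} f_j`, which is holomorphic on a fixed
neighbourhood of `Δ_i` and bounded there by the `L¹` norm of `u⃗`, so Montel's theorem and Cauchy's
estimates apply in each of the three norms.

Injectivity: let `u⃗ = ℋu⃗` and `U = −(1/2) ∑_{j≠k} f_j`, so that `u_k = U` on `Δ_k`. The integral
formula for `f_k` gives `f_k = U − w_{Δ_k} G` near `Δ_k`, with `G` analytic across `Δ_k`. Hence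
crossing `Δ_k` replaces `w_{Δ_k}` by its negative, and exchanges `∑ f_j = f_k − 2U` with `−f_k`
while the other `f_j` are unchanged: the `d + 1` functions `∑ f_j`, `−f_1`, …, `−f_d` are the
branches of one algebraic function on a compact Riemann surface. The product
`(c − ∑ f_j) ∏ (c + f_j)` therefore extends to a bounded entire function, which is constant, for
every `c`. So each `f_k` takes finitely many values, hence is a real constant `r_k`, and
`r_k = −(1/2) ∑_{j≠k} r_j` for all `k` forces `r_k = 0`.

The Fredholm alternative in `C(Δ⃗)` then solves `u⃗ = ℋu⃗ + a⃗`; since `ℋ` maps `L¹` into functions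
analytic near `Δ⃗`, the other spaces reduce to this case.
-/

/-! ### The arcsine measure -/

lemma arcsineMeasure_absolutelyContinuous (a b : ℝ) :
    arcsineMeasure a b ≪ volume.restrict (Icc a b) :=
  withDensity_absolutelyContinuous _ _

lemma ae_mem_Icc_arcsineMeasure (a b : ℝ) : ∀ᵐ x ∂(arcsineMeasure a b), x ∈ Icc a b :=
  (arcsineMeasure_absolutelyContinuous a b).ae_le (ae_restrict_mem measurableSet_Icc)

lemma integral_arcsineMeasure (a b : ℝ) (f : ℝ → ℂ) :
    ∫ x, f x ∂(arcsineMeasure a b) =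
      ∫ x in Icc a b, (1 / (Real.pi * Real.sqrt ((x - a) * (b - x)))) • f x := by
  unfold arcsineMeasure
  rw [integral_withDensity_eq_integral_toReal_smul (by fun_prop)
    (Eventually.of_forall fun _ => ENNReal.ofReal_lt_top)]
  refine integral_congr_ae (Eventually.of_forall fun x => ?_)
  simp only [ENNReal.toReal_ofReal (show 0 ≤ 1 / (Real.pi * Real.sqrt ((x - a) * (b - x))) by
    positivity)]

/-- The Möbius transformation, as a function of `t`, that maps `[a, b]` increasingly onto `[-1, 1]`
and has its pole at `x`. It turns the integral of `1 / (x - t)` against the arcsine density of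
`[a, b]` into the integral of the arcsine density of `[-1, 1]`. -/
def mobiusIcc (a b x t : ℝ) : ℝ := 2 * (x - b) * (t - a) / ((b - a) * (x - t)) - 1

section MobiusIcc

variable {a b x t : ℝ}

lemma mobiusIcc_left (a b x : ℝ) : mobiusIcc a b x a = -1 := by
  simp [mobiusIcc]

lemma mobiusIcc_right (hab : a < b) (hx : b < x) : mobiusIcc a b x b = 1 := by
  have hba : b - a ≠ 0 := by linarith
  have hxb : x - b ≠ 0 := by linarith
  rw [mobiusIcc]
  field_simp
  ring

lemma one_add_mobiusIcc (a b x t : ℝ) :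
    1 + mobiusIcc a b x t = 2 * (x - b) * (t - a) / ((b - a) * (x - t)) := by
  rw [mobiusIcc]
  ring

lemma one_sub_mobiusIcc (hab : a < b) (hx : t < x) :
    1 - mobiusIcc a b x t = 2 * (x - a) * (b - t) / ((b - a) * (x - t)) := by
  have hba : b - a ≠ 0 := by linarith
  have hxt : x - t ≠ 0 := by linarith
  rw [mobiusIcc]
  field_simp
  ring

lemma mobiusIcc_mem_Ioo (hx : b < x) (ht : t ∈ Ioo a b) : mobiusIcc a b x t ∈ Ioo (-1) 1 := by
  obtain ⟨hat, htb⟩ := ht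
  have hadd := one_add_mobiusIcc a b x t
  have hsub := one_sub_mobiusIcc (hat.trans htb) (htb.trans hx)
  have : 0 < 2 * (x - b) * (t - a) / ((b - a) * (x - t)) :=
    div_pos (mul_pos (by linarith) (by linarith)) (mul_pos (by linarith) (by linarith))
  have : 0 < 2 * (x - a) * (b - t) / ((b - a) * (x - t)) :=
    div_pos (mul_pos (by linarith) (by linarith)) (mul_pos (by linarith) (by linarith))
  constructor <;> linarith

lemma hasDerivAt_mobiusIcc (hab : a < b) (hx : t < x) :
    HasDerivAt (mobiusIcc a b x) (2 * ((x - a) * (x - b)) / ((b - a) * (x - t) ^ 2)) t := by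
  have hba : b - a ≠ 0 := by linarith
  have hxt : x - t ≠ 0 := by linarith
  have hnum : HasDerivAt (fun t => 2 * (x - b) * (t - a)) (2 * (x - b)) t := by
    simpa using ((hasDerivAt_id t).sub_const a).const_mul (2 * (x - b))
  have hden : HasDerivAt (fun t => (b - a) * (x - t)) (-(b - a)) t := by
    simpa using ((hasDerivAt_id t).const_sub x).const_mul (b - a)
  refine ((hnum.div hden (mul_ne_zero hba hxt)).sub_const 1).congr_deriv ?_
  field_simp
  ring

lemma sqrt_one_sub_mobiusIcc_sq (hx : b < x) (ht : t ∈ Ioo a b) :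
    Real.sqrt (1 - mobiusIcc a b x t ^ 2) =
      2 * Real.sqrt ((x - a) * (x - b)) * Real.sqrt ((t - a) * (b - t)) /
        ((b - a) * (x - t)) := by
  obtain ⟨hat, htb⟩ := ht
  have hpos : 0 < (b - a) * (x - t) := mul_pos (by linarith) (by linarith)
  have hfactor : 1 - mobiusIcc a b x t ^ 2 =
      (2 / ((b - a) * (x - t))) ^ 2 * ((x - a) * (x - b) * ((t - a) * (b - t))) := by
    calc 1 - mobiusIcc a b x t ^ 2
        = (1 - mobiusIcc a b x t) * (1 + mobiusIcc a b x t) := by ring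
      _ = _ := by
        rw [one_sub_mobiusIcc (hat.trans htb) (htb.trans hx), one_add_mobiusIcc]
        ring
  rw [hfactor, Real.sqrt_mul (sq_nonneg _), Real.sqrt_sq (by positivity),
    Real.sqrt_mul (mul_nonneg (by linarith) (by linarith))]
  ring

lemma hasDerivAt_arcsin_mobiusIcc (hx : b < x) (ht : t ∈ Ioo a b) :
    HasDerivAt (fun t => (Real.sqrt ((x - a) * (x - b)))⁻¹ * Real.arcsin (mobiusIcc a b x t))
      (1 / ((x - t) * Real.sqrt ((t - a) * (b - t)))) t := by
  obtain ⟨hlow, hupp⟩ := mobiusIcc_mem_Ioo hx ht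
  have hroot := sqrt_one_sub_mobiusIcc_sq hx ht
  obtain ⟨hat, htb⟩ := ht
  have hw : 0 < (x - a) * (x - b) := mul_pos (by linarith) (by linarith)
  have hxt : x - t ≠ 0 := by linarith
  have hba : b - a ≠ 0 := by linarith
  have hq : Real.sqrt ((t - a) * (b - t)) ≠ 0 :=
    (Real.sqrt_pos.2 (mul_pos (by linarith) (by linarith))).ne'
  have hW : Real.sqrt ((x - a) * (x - b)) ≠ 0 := (Real.sqrt_pos.2 hw).ne'
  refine (((Real.hasDerivAt_arcsin hlow.ne' hupp.ne).comp t
    (hasDerivAt_mobiusIcc (hat.trans htb) (htb.trans hx))).const_mul _).congr_deriv ?_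
  rw [hroot]
  nth_rewrite 3 [← Real.sq_sqrt hw.le]
  field_simp

lemma continuousOn_arcsin_mobiusIcc (hab : a < b) (hx : b < x) :
    ContinuousOn (fun t => (Real.sqrt ((x - a) * (x - b)))⁻¹ * Real.arcsin (mobiusIcc a b x t))
      (Icc a b) := by
  refine continuousOn_const.mul (Real.continuous_arcsin.comp_continuousOn fun t ht => ?_)
  exact (hasDerivAt_mobiusIcc hab (ht.2.trans_lt hx)).continuousAt.continuousWithinAt

lemma intervalIntegrable_one_div_sub_mul_sqrt (hab : a < b) (hx : b < x) :
    IntervalIntegrable (fun t => 1 / ((x - t) * Real.sqrt ((t - a) * (b - t)))) volume a b := by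
  rw [intervalIntegrable_iff, uIoc_of_le hab.le]
  refine intervalIntegral.integrableOn_deriv_of_nonneg (continuousOn_arcsin_mobiusIcc hab hx)
    (fun t ht => hasDerivAt_arcsin_mobiusIcc hx ht) fun t ht => ?_
  have : 0 < x - t := by linarith [ht.2]
  positivity

lemma integral_one_div_sub_mul_sqrt (hab : a < b) (hx : b < x) :
    ∫ t in a..b, 1 / ((x - t) * Real.sqrt ((t - a) * (b - t))) =
      Real.pi / Real.sqrt ((x - a) * (x - b)) := by
  rw [intervalIntegral.integral_eq_sub_of_hasDerivAt_of_le hab.le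
    (continuousOn_arcsin_mobiusIcc hab hx) (fun t ht => hasDerivAt_arcsin_mobiusIcc hx ht)
    (intervalIntegrable_one_div_sub_mul_sqrt hab hx), mobiusIcc_left, mobiusIcc_right hab hx,
    Real.arcsin_one, Real.arcsin_neg_one]
  ring

end MobiusIcc

lemma integrableOn_arcsine_density (a b : ℝ) :
    IntegrableOn (fun t => 1 / (Real.pi * Real.sqrt ((t - a) * (b - t)))) (Icc a b) := by
  rcases le_or_gt b a with hba | hab
  · have hnull : volume (Icc a b) = 0 := by simp [hba]
    simp only [IntegrableOn, Measure.restrict_eq_zero.2 hnull, integrable_zero_measure]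
  rw [integrableOn_Icc_iff_integrableOn_Ioc, ← uIoc_of_le hab.le, ← intervalIntegrable_iff]
  refine ((intervalIntegrable_one_div_sub_mul_sqrt hab (lt_add_one b)).mul_continuousOn
    (g := fun t => (b + 1 - t) / Real.pi) (by fun_prop)).congr fun t ht => ?_
  rw [uIoc_of_le hab.le] at ht
  have : b + 1 - t ≠ 0 := by linarith [ht.2]
  have hpi := Real.pi_ne_zero
  rcases eq_or_ne (Real.sqrt ((t - a) * (b - t))) 0 with hroot | hroot
  · simp [hroot]
  · field_simp

instance isFiniteMeasure_arcsineMeasure (a b : ℝ) : IsFiniteMeasure (arcsineMeasure a b) :=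
  isFiniteMeasure_withDensity_ofReal (integrableOn_arcsine_density a b).2

lemma integrable_arcsineMeasure_of_continuousOn {a b : ℝ} {u : ℝ → ℝ}
    (hu : ContinuousOn u (Icc a b)) : Integrable u (arcsineMeasure a b) := by
  obtain ⟨C, hC⟩ := isCompact_Icc.exists_bound_of_continuousOn hu
  refine Integrable.of_bound ((hu.aestronglyMeasurable measurableSet_Icc).mono_ac
    (arcsineMeasure_absolutelyContinuous a b)) C ?_
  filter_upwards [ae_mem_Icc_arcsineMeasure a b] with t ht using hC t ht

lemma integral_one_div_sub_arcsineMeasure {a b x : ℝ} (hab : a < b) (hx : b < x) :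
    ∫ t, 1 / ((x : ℂ) - (t : ℂ)) ∂(arcsineMeasure a b) =
      ((1 / Real.sqrt ((x - a) * (x - b)) : ℝ) : ℂ) := by
  have hreal : ∀ t : ℝ,
      (1 / (Real.pi * Real.sqrt ((t - a) * (b - t)))) • (1 / ((x : ℂ) - (t : ℂ))) =
        ((1 / Real.pi * (1 / ((x - t) * Real.sqrt ((t - a) * (b - t)))) : ℝ) : ℂ) := by
    intro t
    rw [Complex.real_smul]
    push_cast
    rw [one_div_mul_one_div, one_div_mul_one_div]
    ring
  simp_rw [integral_arcsineMeasure, hreal]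
  rw [integral_complex_ofReal, integral_Icc_eq_integral_Ioc,
    ← intervalIntegral.integral_of_le hab.le, intervalIntegral.integral_const_mul,
    integral_one_div_sub_mul_sqrt hab hx]
  have hpi := Real.pi_ne_zero
  field_simp

/-! ### The plane cut along an interval -/

/-- The interval `[a, b]` as a subset of `ℂ`. -/
def realCut (a b : ℝ) : Set ℂ := (fun t : ℝ => (t : ℂ)) '' Icc a b

section RealCut

variable {a b : ℝ}

lemma mem_realCut {z : ℂ} : z ∈ realCut a b ↔ z.im = 0 ∧ z.re ∈ Icc a b := by
  constructor
  · rintro ⟨t, ht, rfl⟩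
    simpa using ht
  · rintro ⟨him, hre⟩
    exact ⟨z.re, hre, Complex.ext (by simp) (by simp [him])⟩

lemma ofReal_mem_realCut {x : ℝ} : (x : ℂ) ∈ realCut a b ↔ x ∈ Icc a b := by
  simp [mem_realCut]

lemma disjoint_realCut {a' b' : ℝ} (h : Disjoint (Icc a b) (Icc a' b')) :
    Disjoint (realCut a b) (realCut a' b') :=
  (disjoint_image_iff Complex.ofReal_injective).2 h

lemma isCompact_realCut (a b : ℝ) : IsCompact (realCut a b) :=
  isCompact_Icc.image Complex.continuous_ofReal

lemma isOpen_compl_realCut (a b : ℝ) : IsOpen (realCut a b)ᶜ :=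
  (isCompact_realCut a b).isClosed.isOpen_compl

lemma convex_realCut (a b : ℝ) : Convex ℝ (realCut a b) :=
  (convex_Icc a b).is_linear_image Complex.ofRealCLM.toLinearMap.isLinear

lemma isPreconnected_compl_realCut (a b : ℝ) : IsPreconnected (realCut a b)ᶜ := by
  have hpreconnected :=
    (((convex_halfSpace_im_gt 0).isPreconnected.union (⟨b + 1, 1⟩ : ℂ) (by simp) (by simp)
      (convex_halfSpace_re_gt b).isPreconnected).union (⟨b + 1, -1⟩ : ℂ) (by simp) (by simp)
      (convex_halfSpace_im_lt 0).isPreconnected).union (⟨a - 1, 1⟩ : ℂ) (by simp) (by simp)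
      (convex_halfSpace_re_lt a).isPreconnected
  convert hpreconnected using 1
  ext z
  simp only [mem_compl_iff, mem_realCut, mem_Icc, mem_union, mem_ofPred_eq]
  constructor
  · intro hz
    by_contra! hn
    exact hz ⟨le_antisymm hn.1.1.1 hn.1.2, hn.2, hn.1.1.2⟩
  · rintro (((h | h) | h) | h) ⟨h0, ha, hb⟩ <;> linarith

lemma eqOn_compl_realCut_of_eventuallyEq {f g : ℂ → ℂ} {z : ℂ} (hz : z ∉ realCut a b)
    (hf : DifferentiableOn ℂ f (realCut a b)ᶜ) (hg : DifferentiableOn ℂ g (realCut a b)ᶜ)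
    (hfg : f =ᶠ[𝓝 z] g) : EqOn f g (realCut a b)ᶜ :=
  (hf.analyticOnNhd (isOpen_compl_realCut a b)).eqOn_of_preconnected_of_eventuallyEq
    (hg.analyticOnNhd (isOpen_compl_realCut a b)) (isPreconnected_compl_realCut a b) hz hfg

lemma eqOn_compl_realCut_of_eqOn_Ioi {f g : ℂ → ℂ}
    (hf : DifferentiableOn ℂ f (realCut a b)ᶜ) (hg : DifferentiableOn ℂ g (realCut a b)ᶜ)
    (hfg : ∀ x : ℝ, b < x → f x = g x) : EqOn f g (realCut a b)ᶜ := by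
  have hmem : ((b + 1 : ℝ) : ℂ) ∈ (realCut a b)ᶜ := fun h => by
    linarith [(ofReal_mem_realCut.1 h).2]
  refine (hf.analyticOnNhd (isOpen_compl_realCut a b)).eqOn_of_preconnected_of_frequently_eq
    (hg.analyticOnNhd (isOpen_compl_realCut a b)) (isPreconnected_compl_realCut a b) hmem ?_
  have hright : Tendsto (fun x : ℝ => (x : ℂ)) (𝓝[>] (b + 1)) (𝓝[≠] ((b + 1 : ℝ) : ℂ)) :=
    (Complex.continuous_ofReal.continuousWithinAt).tendsto_nhdsWithin fun x hx => by
      simpa only [mem_compl_singleton_iff, ne_eq, Complex.ofReal_inj] using (mem_Ioi.1 hx).ne'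
  refine hright.frequently (Eventually.frequently ?_)
  filter_upwards [self_mem_nhdsWithin] with x hx
  exact hfg x ((lt_add_one b).trans hx)

lemma sub_ne_zero_of_notMem_realCut {z : ℂ} (hz : z ∉ realCut a b) {t : ℝ} (ht : t ∈ Icc a b) :
    z - t ≠ 0 := fun h =>
  hz (sub_eq_zero.1 h ▸ ofReal_mem_realCut.2 ht)

lemma exists_pos_le_norm_sub_of_disjoint {K : Set ℂ} (hK : IsCompact K)
    (hdisj : Disjoint K (realCut a b)) :
    ∃ δ > 0, ∀ z ∈ Metric.thickening δ K, ∀ t ∈ Icc a b, δ ≤ ‖z - (t : ℂ)‖ := by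
  obtain ⟨δ, hδ, hthick⟩ := hdisj.exists_thickenings hK (isCompact_realCut a b).isClosed
  refine ⟨δ, hδ, fun z hz t ht => ?_⟩
  by_contra! hlt
  refine hthick.ne_of_mem hz (Metric.mem_thickening_iff.2 ⟨t, ofReal_mem_realCut.2 ht, ?_⟩) rfl
  rwa [dist_eq_norm]

lemma exists_pos_le_norm_sub {z : ℂ} (hz : z ∉ realCut a b) :
    ∃ δ > 0, ∀ w ∈ Metric.ball z δ, ∀ t ∈ Icc a b, δ ≤ ‖w - (t : ℂ)‖ := by
  simpa only [Metric.thickening_singleton] using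
    exists_pos_le_norm_sub_of_disjoint isCompact_singleton (disjoint_singleton_left.2 hz)

/-! ### The square root `wBranch` -/

lemma div_sub_mem_slitPlane (hab : a ≤ b) {z : ℂ} (hz : z ∉ realCut a b) :
    (z - b) / (z - a) ∈ Complex.slitPlane := by
  have ha := sub_ne_zero_of_notMem_realCut hz (left_mem_Icc.2 hab)
  by_contra hn
  rw [Complex.mem_slitPlane_iff_not_le_zero, not_not, Complex.nonpos_iff] at hn
  set s := ((z - b) / (z - a)).re
  have hs : (z - b) / (z - a) = s := Complex.ext rfl (by simpa using hn.2)
  rw [div_eq_iff ha] at hs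
  have hpos : 0 < 1 - s := by linarith [hn.1]
  have hzreal : z = (((b - s * a) / (1 - s) : ℝ) : ℂ) := by
    have hne : (1 - s : ℂ) ≠ 0 := by exact_mod_cast hpos.ne'
    push_cast
    rw [eq_div_iff hne]
    linear_combination hs
  rw [hzreal, ofReal_mem_realCut, mem_Icc, le_div_iff₀ hpos, div_le_iff₀ hpos] at hz
  exact hz ⟨by linarith, by nlinarith [hn.1]⟩

lemma wBranch_sq (hab : a ≤ b) {z : ℂ} (hz : z ∉ realCut a b) :
    wBranch a b z ^ 2 = (z - a) * (z - b) := by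
  have ha := sub_ne_zero_of_notMem_realCut hz (left_mem_Icc.2 hab)
  have hb := sub_ne_zero_of_notMem_realCut hz (right_mem_Icc.2 hab)
  have hlog : ((2 : ℕ) : ℂ) * (1 / 2 * Complex.log ((z - b) / (z - a))) =
      Complex.log ((z - b) / (z - a)) := by
    push_cast
    ring
  rw [wBranch, mul_pow, ← Complex.exp_nat_mul, hlog, Complex.exp_log (div_ne_zero hb ha)]
  field_simp

lemma differentiableOn_wBranch (hab : a ≤ b) :
    DifferentiableOn ℂ (wBranch a b) (realCut a b)ᶜ := by
  intro z hz
  have ha := sub_ne_zero_of_notMem_realCut hz (left_mem_Icc.2 hab)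
  have hratio : DifferentiableAt ℂ (fun z : ℂ => (z - b) / (z - a)) z :=
    DifferentiableAt.div (by fun_prop) (by fun_prop) ha
  have hlog := hratio.clog (div_sub_mem_slitPlane hab hz)
  exact (DifferentiableAt.mul (by fun_prop) (hlog.const_mul _).cexp).differentiableWithinAt

lemma exists_pos_wBranch_ofReal (hab : a ≤ b) {x : ℝ} (hx : x ∉ Icc a b) :
    ∃ s : ℝ, 0 < s ∧ wBranch a b x = (((x - a) * s : ℝ) : ℂ) := by
  have hpos : 0 < (x - b) / (x - a) := by
    rw [mem_Icc, not_and_or, not_le, not_le] at hx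
    rcases hx with h | h
    · exact div_pos_of_neg_of_neg (by linarith) (by linarith)
    · exact div_pos (by linarith) (by linarith)
  refine ⟨Real.exp (1 / 2 * Real.log ((x - b) / (x - a))), Real.exp_pos _, ?_⟩
  simp only [wBranch]
  push_cast [Complex.ofReal_log hpos.le]
  rfl

lemma wBranch_ofReal_of_lt (hab : a ≤ b) {x : ℝ} (hx : b < x) :
    wBranch a b x = Real.sqrt ((x - a) * (x - b)) := by
  have hnot : x ∉ Icc a b := fun h => h.2.not_gt hx
  obtain ⟨s, hs, hw⟩ := exists_pos_wBranch_ofReal hab hnot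
  have hsq : ((x - a) * s) ^ 2 = (x - a) * (x - b) := by
    exact_mod_cast hw ▸ wBranch_sq hab (mt ofReal_mem_realCut.1 hnot)
  rw [hw, ← hsq, Real.sqrt_sq (mul_nonneg (by linarith) hs.le)]

end RealCut

/-! ### Holomorphic parametric integrals -/

section ParametricIntegral

variable {α : Type*} [MeasurableSpace α] {μ : Measure α} {E : Type*} [NormedAddCommGroup E]
  [NormedSpace ℂ E] {U : Set ℂ} {F : ℂ → α → E}

lemma aestronglyMeasurable_deriv_of_differentiableOn (hU : IsOpen U)
    (hmeas : ∀ z ∈ U, AEStronglyMeasurable (F z) μ)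
    (hdiff : ∀ᵐ t ∂μ, DifferentiableOn ℂ (fun z => F z t) U) {z : ℂ} (hz : z ∈ U) :
    AEStronglyMeasurable (fun t => deriv (fun w => F w t) z) μ := by
  classical
  refine aestronglyMeasurable_of_tendsto_ae (𝓝[≠] z)
    (f := fun w t => if w ∈ U then slope (fun w => F w t) z w else 0) (fun w => ?_) ?_
  · split_ifs with hw
    · exact ((hmeas w hw).sub (hmeas z hz)).const_smul _
    · exact aestronglyMeasurable_const
  · filter_upwards [hdiff] with t ht
    have hslope := hasDerivAt_iff_tendsto_slope.1 (ht.differentiableAt (hU.mem_nhds hz)).hasDerivAt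
    refine hslope.congr' ?_
    filter_upwards [nhdsWithin_le_nhds (hU.mem_nhds hz)] with w hw
    rw [if_pos hw]

lemma differentiableOn_integral_of_norm_le (hU : IsOpen U) {bound : α → ℝ}
    (hbound : Integrable bound μ) (hmeas : ∀ z ∈ U, AEStronglyMeasurable (F z) μ)
    (hdiff : ∀ᵐ t ∂μ, DifferentiableOn ℂ (fun z => F z t) U)
    (hle : ∀ᵐ t ∂μ, ∀ z ∈ U, ‖F z t‖ ≤ bound t) :
    DifferentiableOn ℂ (fun z => ∫ t, F z t ∂μ) U := by
  intro z₀ hz₀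
  obtain ⟨r, hr, hrU⟩ := Metric.isOpen_iff.1 hU z₀ hz₀
  have hball : ∀ z ∈ Metric.ball z₀ (r / 2), Metric.closedBall z (r / 4) ⊆ U := fun z hz =>
    (Metric.closedBall_subset_ball' (by linarith [Metric.mem_ball.1 hz])).trans hrU
  have hmem : ∀ z ∈ Metric.ball z₀ (r / 2), z ∈ U := fun z hz =>
    hball z hz (Metric.mem_closedBall_self (by positivity))
  have hderiv := hasDerivAt_integral_of_dominated_loc_of_deriv_le (μ := μ) (F := F) (x₀ := z₀)
    (F' := fun z t => deriv (fun w => F w t) z) (bound := fun t => bound t / (r / 4))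
    (Metric.ball_mem_nhds z₀ (half_pos hr))
    (by filter_upwards [hU.mem_nhds hz₀] with z hz using hmeas z hz)
    (hbound.mono' (hmeas z₀ hz₀) (by filter_upwards [hle] with t ht using ht z₀ hz₀))
    (aestronglyMeasurable_deriv_of_differentiableOn hU hmeas hdiff hz₀) ?_
    (hbound.div_const _) ?_
  · exact hderiv.2.differentiableAt.differentiableWithinAt
  · filter_upwards [hdiff, hle] with t hdt hlt z hz
    have hdisc : DiffContOnCl ℂ (fun w => F w t) (Metric.ball z (r / 4)) :=
      (hdt.mono ((closure_ball z (by positivity)).trans_subset (hball z hz))).diffContOnCl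
    exact Complex.norm_deriv_le_of_forall_mem_sphere_norm_le (by positivity) hdisc fun w hw =>
      hlt w (hball z hz (Metric.sphere_subset_closedBall hw))
  · filter_upwards [hdiff] with t ht z hz
    exact (ht.differentiableAt (hU.mem_nhds (hmem z hz))).hasDerivAt

end ParametricIntegral

/-! ### The holomorphic completion of the harmonic extension -/

/-- The holomorphic function `w_Δ(z) ∫ u(x)/(z−x) dω_Δ(x)` off `Δ = [a,b]`, whose real part is
`H_Δ u`. -/
def holExt (a b : ℝ) (u : ℝ → ℝ) (z : ℂ) : ℂ := wBranch a b z * cauchyT a b u z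

section HolExt

variable {a b : ℝ} {u v : ℝ → ℝ} {z : ℂ}

lemma re_holExt (a b : ℝ) (u : ℝ → ℝ) (z : ℂ) : (holExt a b u z).re = harmExt a b u z := rfl

lemma cauchyT_ofReal (a b : ℝ) (u : ℝ → ℝ) (x : ℝ) :
    cauchyT a b u x = ((∫ t, u t / (x - t) ∂(arcsineMeasure a b) : ℝ) : ℂ) := by
  rw [cauchyT, ← integral_complex_ofReal]
  push_cast
  rfl

lemma holExt_ofReal (hab : a ≤ b) {x : ℝ} (hx : x ∉ Icc a b) (u : ℝ → ℝ) :
    holExt a b u x = harmExt a b u x := by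
  obtain ⟨s, -, hs⟩ := exists_pos_wBranch_ofReal hab hx
  rw [← re_holExt, holExt, hs, cauchyT_ofReal, ← Complex.ofReal_mul, Complex.ofReal_re]

lemma holExt_congr (h : ∀ᵐ t ∂(arcsineMeasure a b), u t = v t) (z : ℂ) :
    holExt a b u z = holExt a b v z := by
  rw [holExt, holExt, cauchyT, cauchyT]
  congr 1
  refine integral_congr_ae ?_
  filter_upwards [h] with t ht
  rw [ht]

lemma aestronglyMeasurable_cauchyKernel (hu : AEStronglyMeasurable u (arcsineMeasure a b)) (z : ℂ) :
    AEStronglyMeasurable (fun t : ℝ => (u t : ℂ) / (z - t)) (arcsineMeasure a b) :=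
  ((Complex.continuous_ofReal.comp_aestronglyMeasurable hu).aemeasurable.div
    (by fun_prop)).aestronglyMeasurable

lemma norm_cauchyKernel_le {δ t : ℝ} (hδ : 0 < δ) (hz : δ ≤ ‖z - t‖) (u : ℝ → ℝ) :
    ‖(u t : ℂ) / (z - t)‖ ≤ |u t| / δ := by
  rw [norm_div, Complex.norm_real, Real.norm_eq_abs]
  gcongr

lemma integrable_cauchyKernel (hu : Integrable u (arcsineMeasure a b)) (hz : z ∉ realCut a b) :
    Integrable (fun t : ℝ => (u t : ℂ) / (z - t)) (arcsineMeasure a b) := by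
  obtain ⟨δ, hδ, hdist⟩ := exists_pos_le_norm_sub hz
  refine (hu.abs.div_const δ).mono' (aestronglyMeasurable_cauchyKernel hu.1 z) ?_
  filter_upwards [ae_mem_Icc_arcsineMeasure a b] with t ht
  exact norm_cauchyKernel_le hδ (hdist z (Metric.mem_ball_self hδ) t ht) u

lemma differentiableOn_cauchyT (hu : Integrable u (arcsineMeasure a b)) :
    DifferentiableOn ℂ (cauchyT a b u) (realCut a b)ᶜ := by
  intro z hz
  obtain ⟨δ, hδ, hdist⟩ := exists_pos_le_norm_sub hz
  refine (DifferentiableOn.differentiableAt (s := Metric.ball z δ) ?_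
    (Metric.ball_mem_nhds z hδ)).differentiableWithinAt
  refine differentiableOn_integral_of_norm_le Metric.isOpen_ball (hu.abs.div_const δ)
    (fun w _ => aestronglyMeasurable_cauchyKernel hu.1 w) ?_ ?_
  · filter_upwards [ae_mem_Icc_arcsineMeasure a b] with t ht
    refine DifferentiableOn.div (by fun_prop) (by fun_prop) fun w hw => ?_
    exact norm_pos_iff.1 (hδ.trans_le (hdist w hw t ht))
  · filter_upwards [ae_mem_Icc_arcsineMeasure a b] with t ht w hw
    exact norm_cauchyKernel_le hδ (hdist w hw t ht) u

lemma differentiableOn_holExt (hab : a ≤ b) (hu : Integrable u (arcsineMeasure a b)) :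
    DifferentiableOn ℂ (holExt a b u) (realCut a b)ᶜ :=
  (differentiableOn_wBranch hab).mul (differentiableOn_cauchyT hu)

lemma analyticAt_holExt (hab : a ≤ b) (hu : Integrable u (arcsineMeasure a b))
    (hz : z ∉ realCut a b) : AnalyticAt ℂ (holExt a b u) z :=
  (differentiableOn_holExt hab hu).analyticAt ((isOpen_compl_realCut a b).mem_nhds hz)

lemma norm_cauchyT_le {δ : ℝ} (hδ : 0 < δ) (hz : ∀ t ∈ Icc a b, δ ≤ ‖z - (t : ℂ)‖)
    (hu : Integrable u (arcsineMeasure a b)) :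
    ‖cauchyT a b u z‖ ≤ (∫ t, |u t| ∂(arcsineMeasure a b)) / δ := by
  rw [← integral_div]
  refine norm_integral_le_of_norm_le (hu.abs.div_const δ) ?_
  filter_upwards [ae_mem_Icc_arcsineMeasure a b] with t ht
  exact norm_cauchyKernel_le hδ (hz t ht) u

lemma holExt_add (hz : z ∉ realCut a b) (hu : Integrable u (arcsineMeasure a b))
    (hv : Integrable v (arcsineMeasure a b)) :
    holExt a b (u + v) z = holExt a b u z + holExt a b v z := by
  simp only [holExt, cauchyT]
  rw [← mul_add, ← integral_add (integrable_cauchyKernel hu hz) (integrable_cauchyKernel hv hz)]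
  congr 2
  ext t
  simp only [Pi.add_apply]
  push_cast
  ring

lemma holExt_smul (c : ℝ) (u : ℝ → ℝ) (z : ℂ) : holExt a b (c • u) z = c * holExt a b u z := by
  simp only [holExt, cauchyT]
  rw [mul_left_comm, ← integral_const_mul (c : ℂ)]
  congr 1
  refine integral_congr_ae (Eventually.of_forall fun t => ?_)
  simp only [Pi.smul_apply, smul_eq_mul]
  push_cast
  ring

lemma holExt_one (hab : a < b) (hz : z ∉ realCut a b) : holExt a b 1 z = 1 := by
  have hdiff := differentiableOn_holExt (a := a) (b := b) (u := 1) hab.le (integrable_const 1)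
  refine eqOn_compl_realCut_of_eqOn_Ioi hdiff (differentiableOn_const 1) (fun x hx => ?_) hz
  have hcauchy : cauchyT a b 1 x = ((1 / Real.sqrt ((x - a) * (x - b)) : ℝ) : ℂ) := by
    rw [← integral_one_div_sub_arcsineMeasure hab hx, cauchyT]
    simp only [Pi.one_apply, Complex.ofReal_one]
  have hroot : Real.sqrt ((x - a) * (x - b)) ≠ 0 :=
    (Real.sqrt_pos.2 (mul_pos (by linarith) (by linarith))).ne'
  rw [holExt, hcauchy, wBranch_ofReal_of_lt hab.le hx, ← Complex.ofReal_mul,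
    mul_one_div_cancel hroot, Complex.ofReal_one]

lemma holExt_const (hab : a < b) (hz : z ∉ realCut a b) (c : ℝ) :
    holExt a b (fun _ => c) z = c := by
  have hsmul := holExt_smul (a := a) (b := b) c 1 z
  rw [holExt_one hab hz, mul_one] at hsmul
  rw [← hsmul]
  congr 1
  ext
  simp

lemma eventually_notMem_realCut (a b : ℝ) : ∀ᶠ z in Bornology.cobounded ℂ, z ∉ realCut a b :=
  Bornology.isBounded_def.1 (isCompact_realCut a b).isBounded

lemma isBigO_wBranch_cobounded (hab : a ≤ b) :
    wBranch a b =O[Bornology.cobounded ℂ] (id : ℂ → ℂ) := by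
  have hlin : ∀ c : ℝ, (fun z : ℂ => z - c) =O[Bornology.cobounded ℂ] (id : ℂ → ℂ) := fun c =>
    (Asymptotics.isBigO_refl _ _).sub (Asymptotics.isLittleO_const_id_cobounded (c : ℂ)).isBigO
  refine Asymptotics.IsBigO.of_pow two_ne_zero
    (((hlin a).mul (hlin b)).congr' ?_ (Eventually.of_forall fun z => (sq _).symm))
  filter_upwards [eventually_notMem_realCut a b] with z hz
  exact (wBranch_sq hab hz).symm

lemma isBigO_cauchyT_cobounded (hu : Integrable u (arcsineMeasure a b)) :
    cauchyT a b u =O[Bornology.cobounded ℂ] (fun z : ℂ => z⁻¹) := by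
  refine Asymptotics.IsBigO.of_bound (2 * ∫ t, |u t| ∂(arcsineMeasure a b)) ?_
  filter_upwards [eventually_cobounded_le_norm (2 * (|a| + |b| + 1))] with z hz
  have hab0 : 0 ≤ |a| + |b| := by positivity
  have hdist : ∀ t ∈ Icc a b, ‖z‖ / 2 ≤ ‖z - (t : ℂ)‖ := fun t ht => by
    have htri := norm_sub_norm_le z (t : ℂ)
    rw [Complex.norm_real, Real.norm_eq_abs] at htri
    have ht' : |t| ≤ |a| + |b| := (abs_le_max_abs_abs ht.1 ht.2).trans
      (max_le_add_of_nonneg (abs_nonneg a) (abs_nonneg b))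
    linarith
  refine (norm_cauchyT_le (by linarith) hdist hu).trans_eq ?_
  rw [norm_inv]
  ring

lemma isBigO_holExt_cobounded (hab : a ≤ b) (hu : Integrable u (arcsineMeasure a b)) :
    holExt a b u =O[Bornology.cobounded ℂ] (fun _ => (1 : ℝ)) := by
  refine ((isBigO_wBranch_cobounded hab).mul (isBigO_cauchyT_cobounded hu)).trans ?_
  refine Asymptotics.IsBigO.of_bound 1 (Eventually.of_forall fun z => ?_)
  simpa using mul_inv_le_one

end HolExt

/-! ### The divided difference integral -/

lemma dslope_comm {𝕜 E : Type*} [NontriviallyNormedField 𝕜] [NormedAddCommGroup E]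
    [NormedSpace 𝕜 E] (f : 𝕜 → E) (x y : 𝕜) : dslope f x y = dslope f y x := by
  rcases eq_or_ne y x with rfl | hne
  · rfl
  · rw [dslope_of_ne _ hne, dslope_of_ne _ hne.symm, slope_comm]

lemma norm_dslope_le_of_convex {𝕜 E : Type*} [RCLike 𝕜] [NormedAddCommGroup E] [NormedSpace 𝕜 E]
    {s : Set 𝕜} (hs : Convex ℝ s) {f : 𝕜 → E} {M : ℝ} (hf : ∀ x ∈ s, DifferentiableAt 𝕜 f x)
    (hM : ∀ x ∈ s, ‖deriv f x‖ ≤ M) {x y : 𝕜} (hx : x ∈ s) (hy : y ∈ s) :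
    ‖dslope f x y‖ ≤ M := by
  rcases eq_or_ne y x with rfl | hne
  · rw [dslope_same]
    exact hM y hy
  · rw [dslope_of_ne _ hne, slope_def_module, norm_smul, norm_inv,
      inv_mul_le_iff₀ (norm_pos_iff.2 (sub_ne_zero.2 hne)), mul_comm]
    exact hs.norm_image_sub_le_of_norm_deriv_le hf hM hx hy

/-- The average over `t ∈ [a, b]`, with respect to the arcsine distribution, of the divided
differences `(U(z) − U(t)) / (z − t)`. When `U` is analytic across `[a, b]` it is analytic there
as well, and `w_Δ` times it is the difference between `U` and the extension of `U|_[a,b]`. -/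
def dslopeIntegral (a b : ℝ) (U : ℂ → ℂ) (z : ℂ) : ℂ :=
  ∫ t, dslope U (t : ℂ) z ∂(arcsineMeasure a b)

section DslopeIntegral

variable {a b : ℝ} {U : ℂ → ℂ} {u : ℝ → ℝ}

lemma holExt_sub_eq_neg_wBranch_mul_dslopeIntegral (hab : a < b)
    (hu : Integrable u (arcsineMeasure a b)) (hU : ∀ᵐ t : ℝ ∂(arcsineMeasure a b), U t = u t)
    {z : ℂ} (hz : z ∉ realCut a b) :
    holExt a b u z - U z = -(wBranch a b z * dslopeIntegral a b U z) := by
  have hone := integrable_cauchyKernel (u := 1) (integrable_const 1) hz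
  calc holExt a b u z - U z = holExt a b u z - U z * holExt a b 1 z := by
        rw [holExt_one hab hz, mul_one]
    _ = -(wBranch a b z * dslopeIntegral a b U z) := by
      simp only [holExt, cauchyT, dslopeIntegral]
      rw [mul_left_comm, ← integral_const_mul (U z), ← mul_sub,
        ← integral_sub (integrable_cauchyKernel hu hz) (hone.const_mul (U z)), ← mul_neg,
        ← integral_neg]
      congr 1
      refine integral_congr_ae ?_
      filter_upwards [ae_mem_Icc_arcsineMeasure a b, hU] with t ht hUt
      have hne := sub_ne_zero_of_notMem_realCut hz ht
      rw [dslope_of_ne _ (sub_ne_zero.1 hne), slope_def_field, hUt]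
      simp only [Pi.one_apply, Complex.ofReal_one]
      field_simp
      ring

lemma holExt_sub_sq (hab : a < b) (hu : Integrable u (arcsineMeasure a b))
    (hU : ∀ᵐ t : ℝ ∂(arcsineMeasure a b), U t = u t) {z : ℂ} (hz : z ∉ realCut a b) :
    (holExt a b u z - U z) ^ 2 = (z - a) * (z - b) * dslopeIntegral a b U z ^ 2 := by
  rw [holExt_sub_eq_neg_wBranch_mul_dslopeIntegral hab hu hU hz, neg_sq, mul_pow,
    wBranch_sq hab.le hz]

lemma analyticOnNhd_dslopeIntegral (hU : AnalyticOnNhd ℂ U (realCut a b)) :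
    AnalyticOnNhd ℂ (dslopeIntegral a b U) (realCut a b) := by
  obtain ⟨ε, hε, hεU⟩ := (isCompact_realCut a b).exists_cthickening_subset_open
    (isOpen_analyticAt ℂ U) hU
  have hsub := Metric.thickening_subset_cthickening ε (realCut a b)
  have hcut := Metric.self_subset_thickening hε (realCut a b)
  set N := Metric.thickening ε (realCut a b)
  have hN : IsOpen N := Metric.isOpen_thickening
  obtain ⟨M, hM⟩ := (isCompact_realCut a b).cthickening.exists_bound_of_continuousOn
    (f := deriv U) fun z hz => (hεU hz).deriv.continuousAt.continuousWithinAt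
  have hUN : ∀ z ∈ N, DifferentiableAt ℂ U z := fun z hz => (hεU (hsub hz)).differentiableAt
  have hUN' : DifferentiableOn ℂ U N := fun z hz => (hUN z hz).differentiableWithinAt
  have hIcc : ∀ t ∈ Icc a b, (t : ℂ) ∈ N := fun t ht => hcut (ofReal_mem_realCut.2 ht)
  have hdiff : DifferentiableOn ℂ (dslopeIntegral a b U) N := by
    refine differentiableOn_integral_of_norm_le hN (integrable_const M) (fun z hz => ?_) ?_ ?_
    · simp_rw [dslope_comm U _ z]
      have hcont : ContinuousOn (fun t : ℝ => dslope U z (t : ℂ)) (Icc a b) :=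
        ((continuousOn_dslope (hN.mem_nhds hz)).2 ⟨hUN'.continuousOn, hUN z hz⟩).comp
          Complex.continuous_ofReal.continuousOn hIcc
      exact (hcont.aestronglyMeasurable measurableSet_Icc).mono_ac
        (arcsineMeasure_absolutelyContinuous a b)
    · filter_upwards [ae_mem_Icc_arcsineMeasure a b] with t ht
      exact (Complex.differentiableOn_dslope (hN.mem_nhds (hIcc t ht))).2 hUN'
    · filter_upwards [ae_mem_Icc_arcsineMeasure a b] with t ht z hz
      exact norm_dslope_le_of_convex ((convex_realCut a b).thickening ε) hUN
        (fun z hz => hM z (hsub hz)) (hIcc t ht) hz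
  exact (hdiff.analyticOnNhd hN).mono hcut

end DslopeIntegral

/-! ### Gluing and Liouville's theorem -/

section Glue

variable {K : Set ℂ} {S : ℂ → ℂ}

lemma exists_differentiable_eqOn_compl (hK : Dense Kᶜ)
    (hS : ∀ z₀, ∃ q, AnalyticAt ℂ q z₀ ∧ S =ᶠ[𝓝[Kᶜ] z₀] q) :
    ∃ E : ℂ → ℂ, Differentiable ℂ E ∧ EqOn E S Kᶜ := by
  have hne : ∀ z, (𝓝[Kᶜ] z).NeBot := fun z => mem_closure_iff_nhdsWithin_neBot.1 (hK z)
  have hlim : ∀ {z q}, AnalyticAt ℂ q z → S =ᶠ[𝓝[Kᶜ] z] q → limUnder (𝓝[Kᶜ] z) S = q z :=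
    fun {z q} hq hSq =>
      haveI := hne z
      ((hq.continuousAt.continuousWithinAt.tendsto).congr' hSq.symm).limUnder_eq
  refine ⟨fun z => limUnder (𝓝[Kᶜ] z) S, fun z₀ => ?_, fun z hz => ?_⟩
  · obtain ⟨q, hq, hSq⟩ := hS z₀
    refine hq.differentiableAt.congr_of_eventuallyEq ?_
    filter_upwards [hq.eventually_analyticAt, eventually_nhds_nhdsWithin.2 hSq] with z hqz hSz
    exact hlim hqz hSz
  · obtain ⟨q, hq, hSq⟩ := hS z
    rw [hSq.eq_of_nhdsWithin hz]
    exact hlim hq hSq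

lemma apply_eq_apply_of_isBigO_one_cobounded {E : ℂ → ℂ} (hE : Differentiable ℂ E)
    (hbig : E =O[Bornology.cobounded ℂ] (fun _ => (1 : ℝ))) (z w : ℂ) : E z = E w := by
  obtain ⟨C, hC⟩ := hbig.bound
  refine hE.apply_eq_apply_of_bounded ?_ z w
  have hbdd : Bornology.IsBounded {z | ‖E z‖ ≤ C * ‖(1 : ℝ)‖}ᶜ :=
    Bornology.isBounded_def.2 (by rwa [compl_compl])
  obtain ⟨D, hD⟩ :=
    hbdd.isCompact_closure.exists_bound_of_continuousOn hE.continuous.continuousOn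
  refine isBounded_iff_forall_norm_le.2 ⟨max D (C * ‖(1 : ℝ)‖), forall_mem_range.2 fun z => ?_⟩
  by_cases hz : ‖E z‖ ≤ C * ‖(1 : ℝ)‖
  · exact hz.trans (le_max_right _ _)
  · exact (hD z (subset_closure hz)).trans (le_max_left _ _)

lemma apply_eq_apply_of_analytic_continuation (hK : Bornology.IsBounded K) (hdense : Dense Kᶜ)
    (hS : ∀ z₀, ∃ q, AnalyticAt ℂ q z₀ ∧ S =ᶠ[𝓝[Kᶜ] z₀] q)
    (hbig : S =O[Bornology.cobounded ℂ] (fun _ => (1 : ℝ))) {z w : ℂ} (hz : z ∉ K)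
    (hw : w ∉ K) : S z = S w := by
  obtain ⟨E, hE, hES⟩ := exists_differentiable_eqOn_compl hdense hS
  rw [← hES hz, ← hES hw]
  refine apply_eq_apply_of_isBigO_one_cobounded hE (hbig.congr' ?_ EventuallyEq.rfl) z w
  filter_upwards [Bornology.isBounded_def.1 hK] with z hz
  exact (hES hz).symm

end Glue

lemma dense_compl_setOf_im_eq_zero : Dense {z : ℂ | z.im = 0}ᶜ :=
  (dense_compl_singleton (0 : ℝ)).preimage Complex.isOpenMap_im

/-! ### Injectivity of `I − ℋ` -/

/-- The holomorphic function whose real part on the real line is `(ℋ_{Δ⃗} u⃗)_i`. -/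
def calHExt (d : ℕ) (A B : Fin d → ℝ) (u : Fin d → ℝ → ℝ) (i : Fin d) (z : ℂ) : ℂ :=
  -(1 / 2) * ∑ j ∈ Finset.univ.erase i, holExt (A j) (B j) (u j) z

/-- The polynomial with roots `∑ k, f_k(z)` and `−f_1(z), …, −f_d(z)`, where `f_k` is the
holomorphic completion of `H_{Δ_k} u_k`, evaluated at `c`. For `u⃗` in the kernel of `I − ℋ_{Δ⃗}`,
crossing `Δ_k` exchanges the first root with `−f_k(z)`, so the polynomial continues
analytically. -/
def branchProd (d : ℕ) (A B : Fin d → ℝ) (u : Fin d → ℝ → ℝ) (c z : ℂ) : ℂ :=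
  (c - ∑ k, holExt (A k) (B k) (u k) z) * ∏ k, (c + holExt (A k) (B k) (u k) z)

lemma eq_zero_of_eq_neg_half_sum_erase {ι : Type*} [Fintype ι] [DecidableEq ι] {r : ι → ℝ}
    (h : ∀ k, r k = -(1 / 2) * ∑ j ∈ Finset.univ.erase k, r j) (k : ι) : r k = 0 := by
  have hneg : ∀ k, r k = -∑ j, r j := fun k => by
    have := h k
    rw [← Finset.add_sum_erase _ r (Finset.mem_univ k)]
    linarith
  have hsum : (1 + (Fintype.card ι : ℝ)) * ∑ j, r j = 0 := by
    have := Finset.sum_congr rfl fun k (_ : k ∈ Finset.univ) => hneg k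
    rw [Finset.sum_const, Finset.card_univ, nsmul_eq_mul] at this
    linarith
  rw [hneg, (mul_eq_zero.1 hsum).resolve_left (by positivity), neg_zero]

section Kernel

variable {d : ℕ} {A B : Fin d → ℝ} {u : Fin d → ℝ → ℝ} {i : Fin d}

lemma re_calHExt (u : Fin d → ℝ → ℝ) (i : Fin d) (x : ℝ) :
    (calHExt d A B u i x).re = calH d A B u i x := by
  have hhalf : (-(1 / 2) : ℂ) = ((-(1 / 2) : ℝ) : ℂ) := by
    push_cast
    rfl
  simp only [calHExt, calH, hhalf, Complex.re_ofReal_mul, Complex.re_sum, re_holExt]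

lemma notMem_Icc_of_disjoint
    (hdisj : ∀ i j, i ≠ j → Disjoint (Icc (A i) (B i)) (Icc (A j) (B j))) {x : ℝ}
    (hx : x ∈ Icc (A i) (B i)) {j : Fin d} (hj : j ≠ i) : x ∉ Icc (A j) (B j) := fun h =>
  disjoint_left.1 (hdisj j i hj) h hx

lemma calHExt_ofReal (hAB : ∀ i, A i ≤ B i) (u : Fin d → ℝ → ℝ) {x : ℝ}
    (hx : ∀ j ≠ i, x ∉ Icc (A j) (B j)) : calHExt d A B u i x = calH d A B u i x := by
  simp only [calHExt, calH]
  push_cast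
  congr 1
  exact Finset.sum_congr rfl fun j hj =>
    holExt_ofReal (hAB j) (hx j (Finset.ne_of_mem_erase hj)) (u j)

lemma analyticAt_calHExt (hAB : ∀ i, A i ≤ B i)
    (hu : ∀ i, Integrable (u i) (arcsineMeasure (A i) (B i))) {z : ℂ}
    (hz : ∀ j ≠ i, z ∉ realCut (A j) (B j)) : AnalyticAt ℂ (calHExt d A B u i) z := by
  unfold calHExt
  exact analyticAt_const.mul (Finset.univ.erase i |>.analyticAt_fun_sum fun j hj =>
    analyticAt_holExt (hAB j) (hu j) (hz j (Finset.ne_of_mem_erase hj)))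

lemma sum_holExt_eq_holExt_sub_calHExt (u : Fin d → ℝ → ℝ) (j : Fin d) (z : ℂ) :
    ∑ k, holExt (A k) (B k) (u k) z =
      holExt (A j) (B j) (u j) z - 2 * calHExt d A B u j z := by
  rw [← Finset.add_sum_erase _ _ (Finset.mem_univ j), calHExt]
  ring

lemma branchProd_eq_sq_sub_sq_mul (u : Fin d → ℝ → ℝ) (j : Fin d) (c z : ℂ) :
    branchProd d A B u c z =
      ((c + calHExt d A B u j z) ^ 2 - (holExt (A j) (B j) (u j) z - calHExt d A B u j z) ^ 2) *
        ∏ k ∈ Finset.univ.erase j, (c + holExt (A k) (B k) (u k) z) := by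
  rw [branchProd, sum_holExt_eq_holExt_sub_calHExt u j,
    ← Finset.mul_prod_erase _ _ (Finset.mem_univ j)]
  ring

lemma exists_analyticAt_branchProd_eventuallyEq (hAB : ∀ i, A i < B i)
    (hdisj : ∀ i j, i ≠ j → Disjoint (Icc (A i) (B i)) (Icc (A j) (B j)))
    (hint : ∀ i, Integrable (u i) (arcsineMeasure (A i) (B i)))
    (hu : ∀ i, ∀ᵐ x ∂(arcsineMeasure (A i) (B i)), u i x = calH d A B u i x) (c z₀ : ℂ) :
    ∃ q, AnalyticAt ℂ q z₀ ∧
      branchProd d A B u c =ᶠ[𝓝[(⋃ i, realCut (A i) (B i))ᶜ] z₀] q := by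
  by_cases hz₀ : ∃ j, z₀ ∈ realCut (A j) (B j)
  · obtain ⟨j, hj⟩ := hz₀
    have hother : ∀ z ∈ realCut (A j) (B j), ∀ k ≠ j, z ∉ realCut (A k) (B k) := by
      rintro _ ⟨t, ht, rfl⟩ k hk h
      exact notMem_Icc_of_disjoint hdisj ht hk (ofReal_mem_realCut.1 h)
    have hU : AnalyticOnNhd ℂ (calHExt d A B u j) (realCut (A j) (B j)) := fun z hz =>
      analyticAt_calHExt (fun i => (hAB i).le) hint (hother z hz)
    have hUu : ∀ᵐ t : ℝ ∂(arcsineMeasure (A j) (B j)), calHExt d A B u j t = u j t := by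
      filter_upwards [hu j, ae_mem_Icc_arcsineMeasure (A j) (B j)] with t ht htI
      rw [ht, calHExt_ofReal (fun i => (hAB i).le) u fun k => notMem_Icc_of_disjoint hdisj htI]
    refine ⟨fun z => ((c + calHExt d A B u j z) ^ 2 - (z - A j) * (z - B j) *
      dslopeIntegral (A j) (B j) (calHExt d A B u j) z ^ 2) *
        ∏ k ∈ Finset.univ.erase j, (c + holExt (A k) (B k) (u k) z), ?_, ?_⟩
    · have hG := analyticOnNhd_dslopeIntegral hU z₀ hj
      have hUj := hU z₀ hj
      refine AnalyticAt.mul (by fun_prop) (Finset.analyticAt_fun_prod _ fun k hk => ?_)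
      exact analyticAt_const.add
        (analyticAt_holExt (hAB k).le (hint k) (hother z₀ hj k (Finset.ne_of_mem_erase hk)))
    · filter_upwards [self_mem_nhdsWithin] with z hz
      rw [branchProd_eq_sq_sub_sq_mul u j, holExt_sub_sq (hAB j) (hint j) hUu
        fun h => hz (mem_iUnion.2 ⟨j, h⟩)]
  · push Not at hz₀
    refine ⟨_, ?_, EventuallyEq.rfl⟩
    have hk : ∀ k, AnalyticAt ℂ (holExt (A k) (B k) (u k)) z₀ := fun k =>
      analyticAt_holExt (hAB k).le (hint k) (hz₀ k)
    exact (analyticAt_const.sub (Finset.analyticAt_fun_sum _ fun k _ => hk k)).mul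
      (Finset.analyticAt_fun_prod _ fun k _ => analyticAt_const.add (hk k))

lemma isBigO_branchProd_cobounded (hAB : ∀ i, A i ≤ B i)
    (hint : ∀ i, Integrable (u i) (arcsineMeasure (A i) (B i))) (c : ℂ) :
    branchProd d A B u c =O[Bornology.cobounded ℂ] (fun _ => (1 : ℝ)) := by
  have hconst : (fun _ : ℂ => c) =O[Bornology.cobounded ℂ] (fun _ => (1 : ℝ)) :=
    Asymptotics.isBigO_const_const c one_ne_zero _
  have hk : ∀ k, holExt (A k) (B k) (u k) =O[Bornology.cobounded ℂ] (fun _ => (1 : ℝ)) := fun k =>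
    isBigO_holExt_cobounded (hAB k) (hint k)
  have hsum := hconst.sub (Asymptotics.IsBigO.fun_sum fun k (_ : k ∈ Finset.univ) => hk k)
  have hprod := Asymptotics.IsBigO.finsetProd fun k (_ : k ∈ Finset.univ) => hconst.add (hk k)
  simpa only [Finset.prod_const_one, mul_one] using! hsum.mul hprod

lemma branchProd_eq_branchProd (hAB : ∀ i, A i < B i)
    (hdisj : ∀ i j, i ≠ j → Disjoint (Icc (A i) (B i)) (Icc (A j) (B j)))
    (hint : ∀ i, Integrable (u i) (arcsineMeasure (A i) (B i)))
    (hu : ∀ i, ∀ᵐ x ∂(arcsineMeasure (A i) (B i)), u i x = calH d A B u i x) (c : ℂ) {z w : ℂ}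
    (hz : ∀ i, z ∉ realCut (A i) (B i)) (hw : ∀ i, w ∉ realCut (A i) (B i)) :
    branchProd d A B u c z = branchProd d A B u c w := by
  refine apply_eq_apply_of_analytic_continuation (K := ⋃ i, realCut (A i) (B i)) ?_ ?_
    (exists_analyticAt_branchProd_eventuallyEq hAB hdisj hint hu c)
    (isBigO_branchProd_cobounded (fun i => (hAB i).le) hint c) (by simpa using hz)
    (by simpa using hw)
  · exact Bornology.isBounded_iUnion.2 fun i => (isCompact_realCut (A i) (B i)).isBounded
  · refine dense_compl_setOf_im_eq_zero.mono (compl_subset_compl.2 (iUnion_subset fun i z hz => ?_))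
    exact (mem_realCut.1 hz).1

lemma finite_setOf_branchProd_eq_zero (u : Fin d → ℝ → ℝ) (z : ℂ) :
    {c | branchProd d A B u c z = 0}.Finite := by
  refine ((finite_singleton (∑ k, holExt (A k) (B k) (u k) z)).union
    (finite_range fun k => -holExt (A k) (B k) (u k) z)).subset fun c hc => ?_
  rcases mul_eq_zero.1 hc with h | h
  · exact Or.inl (sub_eq_zero.1 h)
  · obtain ⟨k, -, hk⟩ := Finset.prod_eq_zero_iff.1 h
    exact Or.inr ⟨k, (eq_neg_of_add_eq_zero_left hk).symm⟩

lemma exists_holExt_eq_const (hAB : ∀ i, A i < B i)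
    (hdisj : ∀ i j, i ≠ j → Disjoint (Icc (A i) (B i)) (Icc (A j) (B j)))
    (hint : ∀ i, Integrable (u i) (arcsineMeasure (A i) (B i)))
    (hu : ∀ i, ∀ᵐ x ∂(arcsineMeasure (A i) (B i)), u i x = calH d A B u i x) (j : Fin d) :
    ∃ r : ℝ, ∀ z ∉ realCut (A j) (B j), holExt (A j) (B j) (u j) z = r := by
  have hoff : ∀ z : ℂ, 0 < z.im → ∀ i, z ∉ realCut (A i) (B i) := fun z hz i h =>
    hz.ne' (mem_realCut.1 h).1
  have hI : 0 < Complex.I.im := by simp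
  have hdiff := differentiableOn_holExt (hAB j).le (hint j)
  have hfinite := finite_setOf_branchProd_eq_zero (A := A) (B := B) u Complex.I
  have hmaps : MapsTo (fun z => -holExt (A j) (B j) (u j) z) {z : ℂ | 0 < z.im}
      {c | branchProd d A B u c Complex.I = 0} := fun z hz => by
    rw [mem_ofPred_eq, ← branchProd_eq_branchProd hAB hdisj hint hu _ (hoff z hz) (hoff _ hI)]
    exact mul_eq_zero_of_right _ (Finset.prod_eq_zero (Finset.mem_univ j) (neg_add_cancel _))
  have hupper : ∀ z : ℂ, 0 < z.im →
      holExt (A j) (B j) (u j) z = holExt (A j) (B j) (u j) Complex.I := fun z hz =>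
    neg_injective ((convex_halfSpace_im_gt 0).isPreconnected.constant_of_mapsTo
      hfinite.isDiscrete (hdiff.continuousOn.neg.mono fun w hw => hoff w hw j) hmaps hz hI)
  have hconst : EqOn (holExt (A j) (B j) (u j)) (fun _ => holExt (A j) (B j) (u j) Complex.I)
      (realCut (A j) (B j))ᶜ := by
    refine eqOn_compl_realCut_of_eventuallyEq (hoff _ hI j) hdiff (differentiableOn_const _) ?_
    filter_upwards [(isOpen_lt continuous_const Complex.continuous_im).mem_nhds hI] with z hz
      using hupper z hz
  have hx : B j + 1 ∉ Icc (A j) (B j) := fun h => by linarith [h.2]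
  refine ⟨harmExt (A j) (B j) (u j) (B j + 1 : ℝ), fun z hz => ?_⟩
  rw [← holExt_ofReal (hAB j).le hx, hconst hz, hconst (mt ofReal_mem_realCut.1 hx)]

theorem holExt_eq_zero_of_ae_eq_calH (hAB : ∀ i, A i < B i)
    (hdisj : ∀ i j, i ≠ j → Disjoint (Icc (A i) (B i)) (Icc (A j) (B j)))
    (hint : ∀ i, Integrable (u i) (arcsineMeasure (A i) (B i)))
    (hu : ∀ i, ∀ᵐ x ∂(arcsineMeasure (A i) (B i)), u i x = calH d A B u i x) {z : ℂ}
    (hz : z ∉ realCut (A i) (B i)) : holExt (A i) (B i) (u i) z = 0 := by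
  choose r hr using exists_holExt_eq_const hAB hdisj hint hu
  have hcalH : ∀ k, ∀ x ∈ Icc (A k) (B k),
      calH d A B u k x = -(1 / 2) * ∑ j ∈ Finset.univ.erase k, r j := fun k x hx => by
    rw [calH]
    congr 1
    refine Finset.sum_congr rfl fun j hj => ?_
    rw [← re_holExt, hr j x, Complex.ofReal_re]
    exact mt ofReal_mem_realCut.1 (notMem_Icc_of_disjoint hdisj hx (Finset.ne_of_mem_erase hj))
  have hself : ∀ k, r k = -(1 / 2) * ∑ j ∈ Finset.univ.erase k, r j := fun k => by
    have hx : ((B k + 1 : ℝ) : ℂ) ∉ realCut (A k) (B k) := fun h => by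
      linarith [(ofReal_mem_realCut.1 h).2]
    have hae : ∀ᵐ x ∂(arcsineMeasure (A k) (B k)),
        u k x = -(1 / 2) * ∑ j ∈ Finset.univ.erase k, r j := by
      filter_upwards [hu k, ae_mem_Icc_arcsineMeasure (A k) (B k)] with x hux hxI
      rw [hux, hcalH k x hxI]
    rw [← Complex.ofReal_inj, ← hr k _ hx, holExt_congr hae, holExt_const (hAB k) hx]
  rw [hr i z hz, eq_zero_of_eq_neg_half_sum_erase hself i, Complex.ofReal_zero]

end Kernel

/-! ### Uniform estimates -/

/-- The norm of `L¹(ω_{Δ⃗})`. -/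
def vecL1Norm (d : ℕ) (A B : Fin d → ℝ) (u : Fin d → ℝ → ℝ) : ℝ :=
  ∑ i, ∫ x, |u i x| ∂(arcsineMeasure (A i) (B i))

section Estimates

lemma vecL1Norm_nonneg (d : ℕ) (A B : Fin d → ℝ) (u : Fin d → ℝ → ℝ) : 0 ≤ vecL1Norm d A B u :=
  Finset.sum_nonneg fun _ _ => integral_nonneg fun _ => abs_nonneg _

lemma integral_abs_le_vecL1Norm {d : ℕ} (A B : Fin d → ℝ) (u : Fin d → ℝ → ℝ) (i : Fin d) :
    ∫ x, |u i x| ∂(arcsineMeasure (A i) (B i)) ≤ vecL1Norm d A B u :=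
  Finset.single_le_sum (f := fun i => ∫ x, |u i x| ∂(arcsineMeasure (A i) (B i)))
    (fun _ _ => integral_nonneg fun _ => abs_nonneg _) (Finset.mem_univ i)

lemma exists_eventually_nhdsSet_norm_wBranch_le {a b : ℝ} (hab : a ≤ b) {K : Set ℂ}
    (hK : IsCompact K) (hdisj : Disjoint K (realCut a b)) :
    ∃ C ≥ 0, ∀ᶠ z in 𝓝ˢ K, ‖wBranch a b z‖ ≤ C := by
  have hcont : ContinuousOn (wBranch a b) (realCut a b)ᶜ :=
    (differentiableOn_wBranch hab).continuousOn
  obtain ⟨C, hC⟩ :=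
    hK.exists_bound_of_continuousOn (hcont.mono (subset_compl_iff_disjoint_right.2 hdisj))
  refine ⟨|C| + 1, by positivity, eventually_nhdsSet_iff_forall.2 fun z hz => ?_⟩
  have hcont_z : ContinuousAt (wBranch a b) z :=
    hcont.continuousAt ((isOpen_compl_realCut a b).mem_nhds (disjoint_left.1 hdisj hz))
  have hlt : ‖wBranch a b z‖ < |C| + 1 := by linarith [hC z hz, le_abs_self C]
  exact (hcont_z.norm.eventually_lt_const hlt).mono fun w hw => hw.le

lemma exists_eventually_nhdsSet_norm_holExt_le {a b : ℝ} (hab : a ≤ b) {K : Set ℂ}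
    (hK : IsCompact K) (hdisj : Disjoint K (realCut a b)) :
    ∃ C ≥ 0, ∀ᶠ z in 𝓝ˢ K, z ∉ realCut a b ∧ ∀ u, Integrable u (arcsineMeasure a b) →
      ‖holExt a b u z‖ ≤ C * ∫ t, |u t| ∂(arcsineMeasure a b) := by
  obtain ⟨W, hW, hwBranch⟩ := exists_eventually_nhdsSet_norm_wBranch_le hab hK hdisj
  obtain ⟨δ, hδ, hdist⟩ := exists_pos_le_norm_sub_of_disjoint hK hdisj
  refine ⟨W / δ, by positivity, ?_⟩
  filter_upwards [hwBranch,
    Metric.isOpen_thickening.mem_nhdsSet.2 (Metric.self_subset_thickening hδ K),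
    (isOpen_compl_realCut a b).mem_nhdsSet.2 (subset_compl_iff_disjoint_right.2 hdisj)]
    with z hzW hzδ hz
  refine ⟨hz, fun u hu => ?_⟩
  calc ‖holExt a b u z‖ = ‖wBranch a b z‖ * ‖cauchyT a b u z‖ := norm_mul _ _
    _ ≤ W * ((∫ t, |u t| ∂(arcsineMeasure a b)) / δ) := by
        gcongr
        exact norm_cauchyT_le hδ (hdist z hzδ) hu
    _ = W / δ * ∫ t, |u t| ∂(arcsineMeasure a b) := by ring

variable {d : ℕ} {A B : Fin d → ℝ}

lemma exists_eventually_nhdsSet_norm_calHExt_le (hAB : ∀ i, A i ≤ B i) {i : Fin d} {K : Set ℂ}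
    (hK : IsCompact K) (hdisj : ∀ j ≠ i, Disjoint K (realCut (A j) (B j))) :
    ∃ C ≥ 0, ∀ᶠ z in 𝓝ˢ K, (∀ j ≠ i, z ∉ realCut (A j) (B j)) ∧
      ∀ u, (∀ j, Integrable (u j) (arcsineMeasure (A j) (B j))) →
        ‖calHExt d A B u i z‖ ≤ C * vecL1Norm d A B u := by
  choose! C hC hbound using fun j (hj : j ≠ i) =>
    exists_eventually_nhdsSet_norm_holExt_le (hAB j) hK (hdisj j hj)
  refine ⟨∑ j ∈ Finset.univ.erase i, C j,
    Finset.sum_nonneg fun j hj => hC j (Finset.ne_of_mem_erase hj), ?_⟩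
  have hall : ∀ᶠ z in 𝓝ˢ K, ∀ j ≠ i, z ∉ realCut (A j) (B j) ∧
      ∀ u, Integrable u (arcsineMeasure (A j) (B j)) →
        ‖holExt (A j) (B j) u z‖ ≤ C j * ∫ t, |u t| ∂(arcsineMeasure (A j) (B j)) :=
    eventually_all.2 fun j => eventually_imp_distrib_left.2 (hbound j)
  filter_upwards [hall] with z hz
  refine ⟨fun j hj => (hz j hj).1, fun u hu => ?_⟩
  have hhalf : ‖(-(1 / 2) : ℂ)‖ ≤ 1 := by norm_num
  calc ‖calHExt d A B u i z‖
      ≤ 1 * ‖∑ j ∈ Finset.univ.erase i, holExt (A j) (B j) (u j) z‖ := by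
        rw [calHExt, norm_mul]
        gcongr
    _ ≤ ∑ j ∈ Finset.univ.erase i, C j * vecL1Norm d A B u := by
        rw [one_mul]
        refine norm_sum_le_of_le _ fun j hj => ?_
        have hj := Finset.ne_of_mem_erase hj
        exact ((hz j hj).2 (u j) (hu j)).trans
          (mul_le_mul_of_nonneg_left (integral_abs_le_vecL1Norm A B u j) (hC j hj))
    _ = (∑ j ∈ Finset.univ.erase i, C j) * vecL1Norm d A B u := (Finset.sum_mul ..).symm

lemma exists_thickening_forall {ι α : Type*} [Finite ι] [PseudoMetricSpace α] {K : ι → Set α}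
    (hK : ∀ i, IsCompact (K i)) {p : ι → α → Prop} (hp : ∀ i, ∀ᶠ z in 𝓝ˢ (K i), p i z) :
    ∃ r > 0, ∀ i, ∀ z ∈ Metric.thickening r (K i), p i z := by
  have hsmall : ∀ i, ∀ᶠ r : ℝ in 𝓝[>] 0, ∀ z ∈ Metric.thickening r (K i), p i z := fun i => by
    obtain ⟨r, hr, hsub⟩ := (Metric.hasBasis_nhdsSet_thickening (hK i)).eventually_iff.1 (hp i)
    filter_upwards [Ioo_mem_nhdsGT hr] with s hs z hz
    exact hsub (Metric.thickening_mono hs.2.le _ hz)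
  have hpos : ∀ᶠ r : ℝ in 𝓝[>] 0, 0 < r := self_mem_nhdsWithin
  obtain ⟨r, hr, hall⟩ := (hpos.and (eventually_all.2 hsmall)).exists
  exact ⟨r, hr, hall⟩

theorem exists_thickening_norm_calHExt_le (hAB : ∀ i, A i ≤ B i) {K : Fin d → Set ℂ}
    (hK : ∀ i, IsCompact (K i)) (hdisj : ∀ i j, j ≠ i → Disjoint (K i) (realCut (A j) (B j))) :
    ∃ r > 0, ∃ C ≥ 0, ∀ u, (∀ j, Integrable (u j) (arcsineMeasure (A j) (B j))) →
      ∀ i, DifferentiableOn ℂ (calHExt d A B u i) (Metric.thickening r (K i)) ∧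
        ∀ z ∈ Metric.thickening r (K i), ‖calHExt d A B u i z‖ ≤ C * vecL1Norm d A B u := by
  choose C hC hbound using fun i =>
    exists_eventually_nhdsSet_norm_calHExt_le hAB (hK i) (hdisj i)
  obtain ⟨r, hr, hthick⟩ := exists_thickening_forall hK hbound
  refine ⟨r, hr, ∑ i, C i, Finset.sum_nonneg fun i _ => hC i, fun u hu i => ⟨fun z hz => ?_, ?_⟩⟩
  · exact (analyticAt_calHExt hAB hu (hthick i z hz).1).differentiableAt.differentiableWithinAt
  · intro z hz
    have hCi : C i ≤ ∑ i, C i := Finset.single_le_sum (fun i _ => hC i) (Finset.mem_univ i)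
    exact ((hthick i z hz).2 u hu).trans
      (mul_le_mul_of_nonneg_right hCi (vecL1Norm_nonneg d A B u))

end Estimates

/-! ### Holomorphic functions near a compact set -/

lemma isCompact_setOf_norm_le_lipschitzWith {X E : Type*} [PseudoEMetricSpace X]
    [NormedAddCommGroup E] [ProperSpace E] (M : ℝ) (L : NNReal) :
    IsCompact {g : C(X, E) | (∀ x, ‖g x‖ ≤ M) ∧ LipschitzWith L g} := by
  refine ArzelaAscoli.isCompact_of_equicontinuous _ ?_ ?_
  · have himage : ContinuousMap.toFun '' {g : C(X, E) | (∀ x, ‖g x‖ ≤ M) ∧ LipschitzWith L g} =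
        univ.pi (fun _ => Metric.closedBall 0 M) ∩ {f | LipschitzWith L f} := by
      ext f
      refine ⟨?_, fun hf => ⟨⟨f, hf.2.continuous⟩, ⟨fun x => ?_, hf.2⟩, rfl⟩⟩
      · rintro ⟨g, hg, rfl⟩
        exact ⟨fun x _ => mem_closedBall_zero_iff.2 (hg.1 x), hg.2⟩
      · exact mem_closedBall_zero_iff.1 (hf.1 x (mem_univ x))
    rw [himage]
    exact (isCompact_univ_pi fun _ => isCompact_closedBall 0 M).inter_right
      (isClosed_setOfPred_lipschitzWith L)
  · exact (LipschitzWith.uniformEquicontinuous _ L fun g => g.2.2).equicontinuous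

lemma exists_subseq_tendstoUniformlyOn_of_lipschitzOnWith {ι X E : Type*} [Countable ι]
    [PseudoEMetricSpace X] [NormedAddCommGroup E] [ProperSpace E] {Y : ι → Set X}
    (hY : ∀ i, IsCompact (Y i)) {M : ℝ} {L : NNReal} {F : ℕ → ι → X → E}
    (hM : ∀ n i, ∀ x ∈ Y i, ‖F n i x‖ ≤ M) (hL : ∀ n i, LipschitzOnWith L (F n i) (Y i)) :
    ∃ φ : ℕ → ℕ, StrictMono φ ∧ ∃ g : ι → X → E,
      ∀ i, TendstoUniformlyOn (fun n => F (φ n) i) (g i) atTop (Y i) := by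
  have hcompact : ∀ i, CompactSpace (Y i) := fun i => isCompact_iff_compactSpace.1 (hY i)
  let G : ℕ → (i : ι) → C(Y i, E) := fun n i =>
    ⟨(Y i).domRestrict (F n i), (hL n i).continuousOn.domRestrict⟩
  obtain ⟨g, -, φ, hφ, hlim⟩ := (isCompact_univ_pi fun i =>
    isCompact_setOf_norm_le_lipschitzWith (X := Y i) (E := E) M L).tendsto_subseq (x := G)
      fun n i _ => ⟨fun x => hM n i x x.2, lipschitzOnWith_iff_restrict.1 (hL n i)⟩
  refine ⟨φ, hφ, fun i => Function.extend Subtype.val (g i) 0, fun i => ?_⟩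
  rw [tendstoUniformlyOn_iff_tendstoUniformly_comp_coe,
    Function.extend_comp Subtype.val_injective]
  exact ContinuousMap.tendsto_iff_tendstoUniformly.1 (tendsto_pi_nhds.1 hlim i)

section Cauchy

variable {K : Set ℂ} {F : ℂ → ℂ} {r M : ℝ}

lemma norm_deriv_le_of_norm_le_thickening (hr : 0 < r)
    (hF : DifferentiableOn ℂ F (Metric.thickening r K))
    (hM : ∀ z ∈ Metric.thickening r K, ‖F z‖ ≤ M) :
    ∀ z ∈ Metric.thickening (r / 2) K, ‖deriv F z‖ ≤ M / (r / 2) := by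
  intro z hz
  have hsub : Metric.closedBall z (r / 2) ⊆ Metric.thickening r K := by
    obtain ⟨k, hk, hzk⟩ := Metric.mem_thickening_iff.1 hz
    refine fun w hw => Metric.mem_thickening_iff.2 ⟨k, hk, ?_⟩
    linarith [dist_triangle w z k, Metric.mem_closedBall.1 hw]
  refine Complex.norm_deriv_le_of_forall_mem_sphere_norm_le (by positivity) ?_
    fun w hw => hM w (hsub (Metric.sphere_subset_closedBall hw))
  refine DifferentiableOn.diffContOnCl ?_
  rw [closure_ball _ (by positivity)]
  exact hF.mono hsub

lemma lipschitzOnWith_of_norm_le_thickening (hK : Convex ℝ K) (hr : 0 < r) (hM₀ : 0 ≤ M)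
    (hF : DifferentiableOn ℂ F (Metric.thickening r K))
    (hM : ∀ z ∈ Metric.thickening r K, ‖F z‖ ≤ M) :
    LipschitzOnWith (M / (r / 2)).toNNReal F (Metric.thickening (r / 2) K) := by
  refine (hK.thickening (r / 2)).lipschitzOnWith_of_nnnorm_deriv_le (𝕜 := ℂ) (fun z hz => ?_)
    fun z hz => ?_
  · exact hF.differentiableAt (Metric.isOpen_thickening.mem_nhds
      (Metric.thickening_mono (by linarith) K hz))
  · rw [← NNReal.coe_le_coe, Real.coe_toNNReal _ (by positivity)]
    exact norm_deriv_le_of_norm_le_thickening hr hF hM z hz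

theorem exists_subseq_tendstoUniformlyOn_thickening {ι : Type*} [Countable ι] {K : ι → Set ℂ}
    (hK : ∀ i, IsCompact (K i)) (hKc : ∀ i, Convex ℝ (K i)) (hr : 0 < r) (hM₀ : 0 ≤ M)
    {F : ℕ → ι → ℂ → ℂ} (hF : ∀ n i, DifferentiableOn ℂ (F n i) (Metric.thickening r (K i)))
    (hM : ∀ n i, ∀ z ∈ Metric.thickening r (K i), ‖F n i z‖ ≤ M) :
    ∃ φ : ℕ → ℕ, StrictMono φ ∧ ∃ g : ι → ℂ → ℂ, ∀ i,
      DifferentiableOn ℂ (g i) (Metric.thickening (r / 4) (K i)) ∧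
      TendstoUniformlyOn (fun n => F (φ n) i) (g i) atTop (Metric.thickening (r / 4) (K i)) := by
  have hsub : ∀ i, Metric.cthickening (r / 4) (K i) ⊆ Metric.thickening (r / 2) (K i) := fun i =>
    Metric.cthickening_subset_thickening' (by positivity) (by linarith) _
  have hsub_r : ∀ i, Metric.cthickening (r / 4) (K i) ⊆ Metric.thickening r (K i) := fun i =>
    Metric.cthickening_subset_thickening' hr (by linarith) _
  obtain ⟨φ, hφ, g, hg⟩ := exists_subseq_tendstoUniformlyOn_of_lipschitzOnWith
    (fun i => (hK i).cthickening) (fun n i z hz => hM n i z (hsub_r i hz))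
    fun n i => (lipschitzOnWith_of_norm_le_thickening (hKc i) hr hM₀ (hF n i) (hM n i)).mono
      (hsub i)
  have hlim : ∀ i, TendstoUniformlyOn (fun n => F (φ n) i) (g i) atTop
      (Metric.thickening (r / 4) (K i)) := fun i =>
    (hg i).mono (Metric.thickening_subset_cthickening _ _)
  refine ⟨φ, hφ, g, fun i => ⟨?_, hlim i⟩⟩
  exact (hlim i).tendstoLocallyUniformlyOn.differentiableOn (Eventually.of_forall fun n =>
    (hF (φ n) i).mono (Metric.thickening_mono (by linarith) _)) Metric.isOpen_thickening

end Cauchy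

section SupIcc

variable {a b : ℝ}

lemma supIcc_le (hab : a ≤ b) {f : ℝ → ℝ} {M : ℝ} (h : ∀ x ∈ Icc a b, |f x| ≤ M) :
    supIcc a b f ≤ M := by
  refine csSup_le ((nonempty_Icc.2 hab).image _) ?_
  rintro _ ⟨x, hx, rfl⟩
  exact h x hx

lemma supIcc_nonneg (a b : ℝ) (f : ℝ → ℝ) : 0 ≤ supIcc a b f := by
  refine Real.sSup_nonneg ?_
  rintro _ ⟨x, -, rfl⟩
  exact abs_nonneg _

lemma le_supIcc {f : ℝ → ℝ} (hf : ContinuousOn f (Icc a b)) {x : ℝ} (hx : x ∈ Icc a b) :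
    |f x| ≤ supIcc a b f :=
  le_csSup (isCompact_Icc.image_of_continuousOn hf.abs).bddAbove (mem_image_of_mem _ hx)

variable {F : ℂ → ℂ} {r M : ℝ}

lemma ofReal_mem_thickening_realCut (hr : 0 < r) {x : ℝ} (hx : x ∈ Icc a b) :
    (x : ℂ) ∈ Metric.thickening r (realCut a b) :=
  Metric.self_subset_thickening hr _ (ofReal_mem_realCut.2 hx)

lemma contDiffOn_re_of_differentiableOn_thickening (hr : 0 < r)
    (hF : DifferentiableOn ℂ F (Metric.thickening r (realCut a b))) :
    ContDiffOn ℝ 1 (fun x : ℝ => (F x).re) (Icc a b) := by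
  have hFℝ : ContDiffOn ℝ 1 F (Metric.thickening r (realCut a b)) :=
    (hF.contDiffOn Metric.isOpen_thickening).restrict_scalars ℝ
  exact Complex.reCLM.contDiff.comp_contDiffOn
    (hFℝ.comp Complex.ofRealCLM.contDiff.contDiffOn fun x => ofReal_mem_thickening_realCut hr)

lemma abs_re_le_of_norm_le_thickening (hr : 0 < r)
    (hM : ∀ z ∈ Metric.thickening r (realCut a b), ‖F z‖ ≤ M) {x : ℝ} (hx : x ∈ Icc a b) :
    |(F x).re| ≤ M :=
  (Complex.abs_re_le_norm _).trans (hM x (ofReal_mem_thickening_realCut hr hx))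

lemma lipschitzOnWith_re_of_norm_le_thickening (hr : 0 < r) (hM₀ : 0 ≤ M)
    (hF : DifferentiableOn ℂ F (Metric.thickening r (realCut a b)))
    (hM : ∀ z ∈ Metric.thickening r (realCut a b), ‖F z‖ ≤ M) :
    LipschitzOnWith (M / (r / 2)).toNNReal (fun x : ℝ => (F x).re) (Icc a b) := by
  refine LipschitzOnWith.of_dist_le_mul fun x hx y hy => ?_
  have hlip := lipschitzOnWith_of_norm_le_thickening (convex_realCut a b) hr hM₀ hF hM
  have hdist := hlip.dist_le_mul x (ofReal_mem_thickening_realCut (half_pos hr) hx)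
    y (ofReal_mem_thickening_realCut (half_pos hr) hy)
  rw [Complex.dist_of_im_eq (z := x) (w := y) rfl, Complex.ofReal_re, Complex.ofReal_re,
    Complex.dist_eq] at hdist
  exact (Complex.abs_re_le_norm (F x - F y)).trans hdist

lemma abs_derivWithin_re_le_of_norm_le_thickening (hab : a < b) (hr : 0 < r)
    (hF : DifferentiableOn ℂ F (Metric.thickening r (realCut a b)))
    (hM : ∀ z ∈ Metric.thickening r (realCut a b), ‖F z‖ ≤ M) {x : ℝ} (hx : x ∈ Icc a b) :
    |derivWithin (fun x : ℝ => (F x).re) (Icc a b) x| ≤ M / (r / 2) := by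
  have hderiv := (hF.differentiableAt
    (Metric.isOpen_thickening.mem_nhds (ofReal_mem_thickening_realCut hr hx))).hasDerivAt
  rw [hderiv.real_of_complex.hasDerivWithinAt.derivWithin (uniqueDiffOn_Icc hab x hx)]
  exact (Complex.abs_re_le_norm _).trans (norm_deriv_le_of_norm_le_thickening hr hF hM _
    (ofReal_mem_thickening_realCut (half_pos hr) hx))

end SupIcc

/-! ### Surjectivity of `I − ℋ` -/

section Linearity

variable {d : ℕ} {A B : Fin d → ℝ} {u v : Fin d → ℝ → ℝ} {i : Fin d} {x : ℝ}

lemma calH_add (hx : ∀ j ≠ i, x ∉ Icc (A j) (B j))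
    (hu : ∀ j, Integrable (u j) (arcsineMeasure (A j) (B j)))
    (hv : ∀ j, Integrable (v j) (arcsineMeasure (A j) (B j))) :
    calH d A B (u + v) i x = calH d A B u i x + calH d A B v i x := by
  rw [calH, calH, calH, ← mul_add, ← Finset.sum_add_distrib]
  congr 1
  refine Finset.sum_congr rfl fun j hj => ?_
  have hxj := mt ofReal_mem_realCut.1 (hx j (Finset.ne_of_mem_erase hj))
  rw [← re_holExt, ← re_holExt, ← re_holExt, ← Complex.add_re, ← holExt_add hxj (hu j) (hv j),
    Pi.add_apply]

lemma calH_smul (c : ℝ) (u : Fin d → ℝ → ℝ) (i : Fin d) (x : ℝ) :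
    calH d A B (c • u) i x = c * calH d A B u i x := by
  rw [calH, calH, mul_left_comm c, Finset.mul_sum _ _ c]
  congr 1
  refine Finset.sum_congr rfl fun j _ => ?_
  rw [← re_holExt, ← re_holExt, Pi.smul_apply, holExt_smul, Complex.re_ofReal_mul]

lemma calH_sub (hx : ∀ j ≠ i, x ∉ Icc (A j) (B j))
    (hu : ∀ j, Integrable (u j) (arcsineMeasure (A j) (B j)))
    (hv : ∀ j, Integrable (v j) (arcsineMeasure (A j) (B j))) :
    calH d A B (u - v) i x = calH d A B u i x - calH d A B v i x := by
  have hneg : u - v = u + (-1 : ℝ) • v := by rw [neg_one_smul ℝ v, sub_eq_add_neg]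
  rw [hneg, calH_add (v := (-1 : ℝ) • v) hx hu fun j => (hv j).smul (-1 : ℝ), calH_smul]
  ring

lemma calH_congr (h : ∀ j, ∀ᵐ t : ℝ ∂(arcsineMeasure (A j) (B j)), u j t = v j t) (i : Fin d)
    (x : ℝ) : calH d A B u i x = calH d A B v i x := by
  simp only [calH, ← re_holExt, fun j => holExt_congr (h j) x]

lemma continuousOn_calH (hAB : ∀ i, A i ≤ B i)
    (hu : ∀ j, Integrable (u j) (arcsineMeasure (A j) (B j))) {s : Set ℝ}
    (hs : ∀ x ∈ s, ∀ j ≠ i, x ∉ Icc (A j) (B j)) : ContinuousOn (calH d A B u i) s := by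
  intro x hx
  have hext : AnalyticAt ℂ (calHExt d A B u i) x := analyticAt_calHExt hAB hu fun j hj =>
    mt ofReal_mem_realCut.1 (hs x hx j hj)
  simp only [funext fun x => (re_calHExt (A := A) (B := B) u i x).symm]
  exact (Complex.continuous_re.continuousAt.comp
    (hext.continuousAt.comp Complex.continuous_ofReal.continuousAt)).continuousWithinAt

lemma calH_eq_zero_of_ae_eq_calH (hAB : ∀ i, A i < B i)
    (hdisj : ∀ i j, i ≠ j → Disjoint (Icc (A i) (B i)) (Icc (A j) (B j)))
    (hint : ∀ i, Integrable (u i) (arcsineMeasure (A i) (B i)))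
    (hu : ∀ i, ∀ᵐ x ∂(arcsineMeasure (A i) (B i)), u i x = calH d A B u i x)
    (hx : ∀ j ≠ i, x ∉ Icc (A j) (B j)) : calH d A B u i x = 0 := by
  rw [calH, Finset.sum_eq_zero, mul_zero]
  intro j hj
  rw [← re_holExt, holExt_eq_zero_of_ae_eq_calH hAB hdisj hint hu
    (mt ofReal_mem_realCut.1 (hx j (Finset.ne_of_mem_erase hj))), Complex.zero_re]

theorem calH_eq_calH_of_ae_eq (hAB : ∀ i, A i < B i)
    (hdisj : ∀ i j, i ≠ j → Disjoint (Icc (A i) (B i)) (Icc (A j) (B j)))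
    (hint_u : ∀ i, Integrable (u i) (arcsineMeasure (A i) (B i)))
    (hint_v : ∀ i, Integrable (v i) (arcsineMeasure (A i) (B i))) {a : Fin d → ℝ → ℝ}
    (hu : ∀ i, ∀ᵐ x ∂(arcsineMeasure (A i) (B i)), u i x = calH d A B u i x + a i x)
    (hv : ∀ i, ∀ᵐ x ∂(arcsineMeasure (A i) (B i)), v i x = calH d A B v i x + a i x)
    (hx : ∀ j ≠ i, x ∉ Icc (A j) (B j)) : calH d A B u i x = calH d A B v i x := by
  rw [← sub_eq_zero, ← calH_sub hx hint_u hint_v]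
  refine calH_eq_zero_of_ae_eq_calH hAB hdisj (fun k => (hint_u k).sub (hint_v k)) (fun k => ?_) hx
  filter_upwards [hu k, hv k, ae_mem_Icc_arcsineMeasure (A k) (B k)] with t hut hvt ht
  rw [calH_sub (fun _ => notMem_Icc_of_disjoint hdisj ht) hint_u hint_v, Pi.sub_apply,
    Pi.sub_apply, hut, hvt]
  ring

end Linearity

lemma exists_eq_add_of_isCompactOperator {𝕜 X : Type*} [NontriviallyNormedField 𝕜]
    [NormedAddCommGroup X] [NormedSpace 𝕜 X] [CompleteSpace X] {T : X →ₗ[𝕜] X}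
    (hT : IsCompactOperator T) (hker : ∀ x, T x = x → x = 0) (y : X) : ∃ x, x = T x + y := by
  have hT' : IsCompactOperator (ContinuousLinearMap.mkOfIsCompactOperator hT) := hT
  have hres := (hT'.hasEigenvalue_or_mem_resolventSet one_ne_zero).resolve_left fun heig => by
    obtain ⟨x, hx⟩ := heig.exists_hasEigenvector
    exact hx.2 (hker x (by simpa using hx.apply_eq_smul))
  obtain ⟨U, hU⟩ := spectrum.mem_resolventSet_iff.1 hres
  have hsolve : U.val ((U⁻¹).val y) = y := by
    rw [← mul_apply_eq_comp, Units.mul_inv, one_apply_eq_self]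
  refine ⟨(U⁻¹).val y, ?_⟩
  rw [hU] at hsolve
  exact (sub_eq_iff_eq_add'.1 (by simpa using hsolve))

section Solvability

variable {d : ℕ} {A B : Fin d → ℝ}

lemma vecL1Norm_le_of_forall_abs_le {u : Fin d → ℝ → ℝ} {M : ℝ}
    (hu : ∀ i, ∀ x ∈ Icc (A i) (B i), |u i x| ≤ M) :
    vecL1Norm d A B u ≤ (∑ i, (arcsineMeasure (A i) (B i)).real univ) * M := by
  rw [vecL1Norm, Finset.sum_mul]
  refine Finset.sum_le_sum fun i _ => ?_
  rw [← smul_eq_mul, ← integral_const]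
  refine integral_mono_of_nonneg (Eventually.of_forall fun x => abs_nonneg _)
    (integrable_const M) ?_
  filter_upwards [ae_mem_Icc_arcsineMeasure (A i) (B i)] with x hx
  exact hu i x hx

/-- Extends an element of `C(Δ⃗)` to a vector of functions on the line, by constants outside the
intervals. -/
def vecIccExtend (hAB : ∀ i, A i ≤ B i) (u : (i : Fin d) → C(Icc (A i) (B i), ℝ)) :
    Fin d → ℝ → ℝ := fun i => IccExtend (hAB i) (u i)

lemma integrable_vecIccExtend (hAB : ∀ i, A i ≤ B i) (u : (i : Fin d) → C(Icc (A i) (B i), ℝ))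
    (i : Fin d) : Integrable (vecIccExtend hAB u i) (arcsineMeasure (A i) (B i)) :=
  integrable_arcsineMeasure_of_continuousOn (u i).continuous.Icc_extend'.continuousOn

lemma abs_vecIccExtend_le (hAB : ∀ i, A i ≤ B i) (u : (i : Fin d) → C(Icc (A i) (B i), ℝ))
    (i : Fin d) (x : ℝ) : |vecIccExtend hAB u i x| ≤ ‖u‖ :=
  ((u i).norm_coe_le_norm _).trans (norm_le_pi_norm u i)

/-- The operator `ℋ_{Δ⃗}` on the Banach space `C(Δ⃗)`, realised as a product of spaces of
continuous functions. -/
def calHLinearMap (hAB : ∀ i, A i ≤ B i)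
    (hdisj : ∀ i j, i ≠ j → Disjoint (Icc (A i) (B i)) (Icc (A j) (B j))) :
    ((i : Fin d) → C(Icc (A i) (B i), ℝ)) →ₗ[ℝ] ((i : Fin d) → C(Icc (A i) (B i), ℝ)) where
  toFun u i := ⟨fun x => calH d A B (vecIccExtend hAB u) i x,
    continuousOn_iff_continuous_domRestrict.1 (continuousOn_calH hAB
      (integrable_vecIccExtend hAB u) fun _ hx _ => notMem_Icc_of_disjoint hdisj hx)⟩
  map_add' u v := by
    ext i x
    exact calH_add (fun _ => notMem_Icc_of_disjoint hdisj x.2) (integrable_vecIccExtend hAB u)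
      (integrable_vecIccExtend hAB v)
  map_smul' c u := by
    ext i x
    exact calH_smul c (vecIccExtend hAB u) i x

lemma exists_thickening_norm_calHExt_vecIccExtend_le (hAB : ∀ i, A i ≤ B i)
    (hdisj : ∀ i j, i ≠ j → Disjoint (Icc (A i) (B i)) (Icc (A j) (B j))) :
    ∃ r > 0, ∃ C ≥ 0, ∀ (u : (i : Fin d) → C(Icc (A i) (B i), ℝ)) (i : Fin d),
      DifferentiableOn ℂ (calHExt d A B (vecIccExtend hAB u) i)
        (Metric.thickening r (realCut (A i) (B i))) ∧
      ∀ z ∈ Metric.thickening r (realCut (A i) (B i)),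
        ‖calHExt d A B (vecIccExtend hAB u) i z‖ ≤ C * ‖u‖ := by
  obtain ⟨r, hr, C, hC, h⟩ := exists_thickening_norm_calHExt_le hAB
    (fun i => isCompact_realCut (A i) (B i)) fun i j hj => disjoint_realCut (hdisj i j hj.symm)
  refine ⟨r, hr, C * ∑ i, (arcsineMeasure (A i) (B i)).real univ, by positivity, fun u i => ?_⟩
  obtain ⟨hdiff, hle⟩ := h (vecIccExtend hAB u) (integrable_vecIccExtend hAB u) i
  refine ⟨hdiff, fun z hz => (hle z hz).trans ?_⟩
  rw [mul_assoc]
  gcongr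
  exact vecL1Norm_le_of_forall_abs_le fun i x _ => abs_vecIccExtend_le hAB u i x

lemma isCompactOperator_calHLinearMap (hAB : ∀ i, A i ≤ B i)
    (hdisj : ∀ i j, i ≠ j → Disjoint (Icc (A i) (B i)) (Icc (A j) (B j))) :
    IsCompactOperator (calHLinearMap hAB hdisj) := by
  obtain ⟨r, hr, C, hC, h⟩ := exists_thickening_norm_calHExt_vecIccExtend_le hAB hdisj
  rw [isCompactOperator_iff_exists_mem_nhds_image_subset_compact]
  refine ⟨Metric.closedBall 0 1, Metric.closedBall_mem_nhds 0 one_pos, _, isCompact_univ_pi fun i =>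
    isCompact_setOf_norm_le_lipschitzWith C (C / (r / 2)).toNNReal, ?_⟩
  rintro _ ⟨u, hu, rfl⟩ i -
  have hle : ∀ z ∈ Metric.thickening r (realCut (A i) (B i)),
      ‖calHExt d A B (vecIccExtend hAB u) i z‖ ≤ C := fun z hz =>
    ((h u i).2 z hz).trans (mul_le_of_le_one_right hC (mem_closedBall_zero_iff.1 hu))
  have happly : ∀ x, calHLinearMap hAB hdisj u i x = (calHExt d A B (vecIccExtend hAB u) i x).re :=
    fun x => (re_calHExt _ _ _).symm
  refine ⟨fun x => ?_, fun x y => ?_⟩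
  · rw [happly]
    exact abs_re_le_of_norm_le_thickening hr hle x.2
  · rw [happly, happly]
    exact lipschitzOnWith_re_of_norm_le_thickening hr hC (h u i).1 hle x.2 y.2

lemma eq_zero_of_calHLinearMap_eq_self (hAB : ∀ i, A i < B i)
    (hdisj : ∀ i j, i ≠ j → Disjoint (Icc (A i) (B i)) (Icc (A j) (B j)))
    (u : (i : Fin d) → C(Icc (A i) (B i), ℝ))
    (hu : calHLinearMap (fun i => (hAB i).le) hdisj u = u) : u = 0 := by
  have hAB' : ∀ i, A i ≤ B i := fun i => (hAB i).le
  have hfix : ∀ i x, calH d A B (vecIccExtend hAB' u) i x.1 = u i x := fun i x =>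
    DFunLike.congr_fun (congrFun hu i) x
  have hae : ∀ i, ∀ᵐ x ∂(arcsineMeasure (A i) (B i)),
      vecIccExtend hAB' u i x = calH d A B (vecIccExtend hAB' u) i x := fun i => by
    filter_upwards [ae_mem_Icc_arcsineMeasure (A i) (B i)] with x hx
    rw [hfix i ⟨x, hx⟩, vecIccExtend, IccExtend_of_mem _ _ hx]
  ext i x
  rw [← hfix i x]
  refine (calH_eq_zero_of_ae_eq_calH hAB hdisj (integrable_vecIccExtend hAB' u) hae) fun j hj =>
    notMem_Icc_of_disjoint hdisj x.2 hj

theorem exists_eq_calH_add (hAB : ∀ i, A i < B i)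
    (hdisj : ∀ i j, i ≠ j → Disjoint (Icc (A i) (B i)) (Icc (A j) (B j))) {a : Fin d → ℝ → ℝ}
    (ha : ∀ i, Integrable (a i) (arcsineMeasure (A i) (B i))) :
    ∃ u : Fin d → ℝ → ℝ, (∀ i, Integrable (u i) (arcsineMeasure (A i) (B i))) ∧
      ∀ i x, u i x = calH d A B u i x + a i x := by
  have hAB' : ∀ i, A i ≤ B i := fun i => (hAB i).le
  have hcont : ∀ v : Fin d → ℝ → ℝ, (∀ i, Integrable (v i) (arcsineMeasure (A i) (B i))) →
      ∀ i, ContinuousOn (calH d A B v i) (Icc (A i) (B i)) := fun v hv i =>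
    continuousOn_calH hAB' hv fun _ hx _ => notMem_Icc_of_disjoint hdisj hx
  -- `ℋa` is continuous even for `a ∈ L¹`, so `g = ℋg + ℋa` can be solved in `C(Δ⃗)`.
  obtain ⟨g, hg⟩ := exists_eq_add_of_isCompactOperator (isCompactOperator_calHLinearMap hAB' hdisj)
    (eq_zero_of_calHLinearMap_eq_self hAB hdisj)
    fun i => ⟨_, continuousOn_iff_continuous_domRestrict.1 (hcont a ha i)⟩
  have hga : ∀ i, Integrable ((vecIccExtend hAB' g + a) i) (arcsineMeasure (A i) (B i)) :=
    fun i => (integrable_vecIccExtend hAB' g i).add (ha i)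
  have hgI : ∀ i, ∀ x ∈ Icc (A i) (B i),
      vecIccExtend hAB' g i x = calH d A B (vecIccExtend hAB' g + a) i x := fun i x hx => by
    rw [calH_add (fun _ => notMem_Icc_of_disjoint hdisj hx) (integrable_vecIccExtend hAB' g) ha,
      vecIccExtend, IccExtend_of_mem _ _ hx]
    exact DFunLike.congr_fun (congrFun hg i) ⟨x, hx⟩
  refine ⟨fun i x => calH d A B (vecIccExtend hAB' g + a) i x + a i x, fun i =>
    (integrable_arcsineMeasure_of_continuousOn (hcont _ hga i)).add (ha i), fun i x => ?_⟩
  refine congrArg (· + a i x) (calH_congr (fun j => ?_) i x)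
  filter_upwards [ae_mem_Icc_arcsineMeasure (A j) (B j)] with t ht
  rw [Pi.add_apply, Pi.add_apply, hgI j t ht]

end Solvability

/-! ### Spaces between analytic functions and `L¹` -/

/-- A normed space of vector functions on `Δ⃗ = ([A i, B i])`, given by a membership predicate and
a norm, which embeds continuously into `L¹(ω_{Δ⃗*})`, `Δ⃗* = ([A' i, B' i])`, and into which real
parts of vectors of functions holomorphic near `Δ⃗` embed continuously for the sup norm. Such a
space is a common setting for `L¹(ω_{Δ⃗})`, `C(Δ⃗)` and `C¹(Δ⃗)`. -/
structure IsIntermediateSpace (d : ℕ) (A' B' A B : Fin d → ℝ) (mem : (Fin d → ℝ → ℝ) → Prop)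
    (nrm : (Fin d → ℝ → ℝ) → ℝ) : Prop where
  nrm_nonneg : ∀ u, 0 ≤ nrm u
  add_mem : ∀ u v, mem u → mem v → mem (u + v)
  integrable : ∀ u, mem u → ∀ i, Integrable (u i) (arcsineMeasure (A' i) (B' i))
  exists_vecL1Norm_le : ∃ c ≥ 0, ∀ u, mem u → vecL1Norm d A' B' u ≤ c * nrm u
  re_mem : ∀ r > 0, ∀ F : Fin d → ℂ → ℂ,
    (∀ i, DifferentiableOn ℂ (F i) (Metric.thickening r (realCut (A i) (B i)))) →
    mem fun i x => (F i x).re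
  exists_nrm_re_le : ∀ r > 0, ∃ D ≥ 0, ∀ (F : Fin d → ℂ → ℂ) (M : ℝ),
    (∀ i, DifferentiableOn ℂ (F i) (Metric.thickening r (realCut (A i) (B i)))) →
    (∀ i, ∀ z ∈ Metric.thickening r (realCut (A i) (B i)), ‖F i z‖ ≤ M) →
    nrm (fun i x => (F i x).re) ≤ D * M

namespace IsIntermediateSpace

variable {d : ℕ} {A' B' A B : Fin d → ℝ} {mem : (Fin d → ℝ → ℝ) → Prop}
  {nrm : (Fin d → ℝ → ℝ) → ℝ}

lemma exists_norm_calHExt_le (h : IsIntermediateSpace d A' B' A B mem nrm)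
    (hAB' : ∀ i, A' i ≤ B' i)
    (hdisj : ∀ i j, j ≠ i → Disjoint (Icc (A i) (B i)) (Icc (A' j) (B' j))) :
    ∃ r > 0, ∃ C ≥ 0, ∀ u, mem u → ∀ i,
      DifferentiableOn ℂ (calHExt d A' B' u i) (Metric.thickening r (realCut (A i) (B i))) ∧
      ∀ z ∈ Metric.thickening r (realCut (A i) (B i)), ‖calHExt d A' B' u i z‖ ≤ C * nrm u := by
  obtain ⟨r, hr, C, hC, hext⟩ := exists_thickening_norm_calHExt_le hAB'
    (fun i => isCompact_realCut (A i) (B i)) fun i j hj => disjoint_realCut (hdisj i j hj)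
  obtain ⟨c, hc, hL1⟩ := h.exists_vecL1Norm_le
  refine ⟨r, hr, C * c, by positivity, fun u hu i => ?_⟩
  obtain ⟨hdiff, hle⟩ := hext u (h.integrable u hu) i
  refine ⟨hdiff, fun z hz => (hle z hz).trans ?_⟩
  rw [mul_assoc]
  gcongr
  exact hL1 u hu

theorem exists_nrm_calH_le (h : IsIntermediateSpace d A' B' A B mem nrm)
    (hAB' : ∀ i, A' i ≤ B' i)
    (hdisj : ∀ i j, j ≠ i → Disjoint (Icc (A i) (B i)) (Icc (A' j) (B' j))) :
    ∃ M : ℝ, ∀ u, mem u → nrm (fun i x => calH d A' B' u i x) ≤ M * nrm u := by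
  obtain ⟨r, hr, C, -, hext⟩ := h.exists_norm_calHExt_le hAB' hdisj
  obtain ⟨D, -, hre⟩ := h.exists_nrm_re_le r hr
  refine ⟨D * C, fun u hu => ?_⟩
  simp only [← re_calHExt, mul_assoc]
  exact hre _ _ (fun i => (hext u hu i).1) fun i => (hext u hu i).2

lemma tendsto_nrm_re_sub (h : IsIntermediateSpace d A' B' A B mem nrm) {r : ℝ} (hr : 0 < r)
    {F : ℕ → Fin d → ℂ → ℂ} {g : Fin d → ℂ → ℂ}
    (hF : ∀ n i, DifferentiableOn ℂ (F n i) (Metric.thickening r (realCut (A i) (B i))))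
    (hg : ∀ i, DifferentiableOn ℂ (g i) (Metric.thickening r (realCut (A i) (B i))))
    (hlim : ∀ i, TendstoUniformlyOn (fun n => F n i) (g i) atTop
      (Metric.thickening r (realCut (A i) (B i)))) :
    Tendsto (fun n => nrm fun i x => (F n i x).re - (g i x).re) atTop (𝓝 0) := by
  obtain ⟨D, hD, hre⟩ := h.exists_nrm_re_le r hr
  refine tendsto_order.2 ⟨fun ε hε => Eventually.of_forall fun n => hε.trans_le (h.nrm_nonneg _),
    fun ε hε => ?_⟩
  have hη : D * (ε / (D + 1)) < ε := by
    rw [← mul_div_assoc, div_lt_iff₀ (by positivity)]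
    linarith
  filter_upwards [eventually_all.2 fun i => Metric.tendstoUniformlyOn_iff.1 (hlim i)
    (ε / (D + 1)) (by positivity)] with n hn
  refine (hre (fun i z => F n i z - g i z) _ (fun i => (hF n i).sub (hg i))
    fun i z hz => ?_).trans_lt hη
  rw [← dist_eq_norm, dist_comm]
  exact (hn i z hz).le

theorem exists_subseq_tendsto_calH (h : IsIntermediateSpace d A' B' A B mem nrm)
    (hAB' : ∀ i, A' i ≤ B' i)
    (hdisj : ∀ i j, j ≠ i → Disjoint (Icc (A i) (B i)) (Icc (A' j) (B' j)))
    (u : ℕ → Fin d → ℝ → ℝ) (hu : ∀ n, mem (u n)) (hu_le : ∀ n, nrm (u n) ≤ 1) :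
    ∃ φ : ℕ → ℕ, StrictMono φ ∧ ∃ v : Fin d → ℝ → ℝ, mem v ∧
      Tendsto (fun n => nrm fun i x => calH d A' B' (u (φ n)) i x - v i x) atTop (𝓝 0) := by
  obtain ⟨r, hr, C, hC, hext⟩ := h.exists_norm_calHExt_le hAB' hdisj
  obtain ⟨φ, hφ, g, hg⟩ := exists_subseq_tendstoUniformlyOn_thickening
    (fun i => isCompact_realCut (A i) (B i)) (fun i => convex_realCut (A i) (B i)) hr hC
    (fun n i => (hext (u n) (hu n) i).1)
    fun n i z hz => ((hext (u n) (hu n) i).2 z hz).trans (mul_le_of_le_one_right hC (hu_le n))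
  have hr4 : 0 < r / 4 := by positivity
  refine ⟨φ, hφ, fun i x => (g i x).re, h.re_mem _ hr4 g fun i => (hg i).1, ?_⟩
  simp only [← re_calHExt]
  exact h.tendsto_nrm_re_sub hr4 (fun n i => (hext _ (hu (φ n)) i).1.mono
    (Metric.thickening_mono (by linarith) _)) (fun i => (hg i).1) fun i => (hg i).2

theorem exists_unique_eq_calH_add (h : IsIntermediateSpace d A' B' A B mem nrm)
    (hAB' : ∀ i, A' i < B' i) (hsub : ∀ i, Icc (A' i) (B' i) ⊆ Icc (A i) (B i))
    (hdisj : ∀ i j, i ≠ j → Disjoint (Icc (A i) (B i)) (Icc (A j) (B j)))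
    (a : Fin d → ℝ → ℝ) (ha : mem a) :
    ∃ u, mem u ∧ (∀ i, ∀ x ∈ Icc (A i) (B i), u i x = calH d A' B' u i x + a i x) ∧
      ∀ u', mem u' → (∀ i, ∀ x ∈ Icc (A i) (B i), u' i x = calH d A' B' u' i x + a i x) →
        ∀ i, ∀ x ∈ Icc (A i) (B i), u' i x = u i x := by
  have hdisj' : ∀ i j, i ≠ j → Disjoint (Icc (A' i) (B' i)) (Icc (A' j) (B' j)) := fun i j hij =>
    (hdisj i j hij).mono (hsub i) (hsub j)
  have hae : ∀ v : Fin d → ℝ → ℝ,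
      (∀ i, ∀ x ∈ Icc (A i) (B i), v i x = calH d A' B' v i x + a i x) →
      ∀ i, ∀ᵐ x ∂(arcsineMeasure (A' i) (B' i)), v i x = calH d A' B' v i x + a i x :=
    fun v hv i => (ae_mem_Icc_arcsineMeasure (A' i) (B' i)).mono fun x hx => hv i x (hsub i hx)
  obtain ⟨u, hu_int, hu⟩ := exists_eq_calH_add hAB' hdisj' (h.integrable a ha)
  have hu_mem : mem u := by
    obtain ⟨r, hr, C, -, hext⟩ := exists_thickening_norm_calHExt_le (fun i => (hAB' i).le)
      (fun i => isCompact_realCut (A i) (B i)) fun i j hj =>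
        disjoint_realCut ((hdisj i j hj.symm).mono_right (hsub j))
    have hu_eq : u = (fun i (x : ℝ) => (calHExt d A' B' u i x).re) + a := by
      ext i x
      rw [Pi.add_apply, Pi.add_apply, re_calHExt, ← hu]
    rw [hu_eq]
    exact h.add_mem _ _ (h.re_mem r hr _ fun i => (hext u hu_int i).1) ha
  refine ⟨u, hu_mem, fun i x _ => hu i x, fun u' hu'_mem hu' i x hx => ?_⟩
  rw [hu' i x hx, hu i x, calH_eq_calH_of_ae_eq hAB' hdisj' (h.integrable u' hu'_mem) hu_int
    (hae u' hu') (hae u fun i x _ => hu i x)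
    fun j hj hxj => notMem_Icc_of_disjoint hdisj hx hj (hsub j hxj)]

theorem opGoodOn (h : IsIntermediateSpace d A' B' A B mem nrm) (hAB' : ∀ i, A' i < B' i)
    (hsub : ∀ i, Icc (A' i) (B' i) ⊆ Icc (A i) (B i))
    (hdisj : ∀ i j, i ≠ j → Disjoint (Icc (A i) (B i)) (Icc (A j) (B j))) :
    OpGoodOn d A' B' A B mem nrm := by
  have hdisj' : ∀ i j, j ≠ i → Disjoint (Icc (A i) (B i)) (Icc (A' j) (B' j)) := fun i j hj =>
    (hdisj i j hj.symm).mono_right (hsub j)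
  exact ⟨h.exists_nrm_calH_le (fun i => (hAB' i).le) hdisj',
    h.exists_subseq_tendsto_calH (fun i => (hAB' i).le) hdisj',
    h.exists_unique_eq_calH_add hAB' hsub hdisj⟩

end IsIntermediateSpace

section Spaces

variable {d : ℕ} {A' B' A B : Fin d → ℝ}

lemma isIntermediateSpace_integrable (d : ℕ) (A B : Fin d → ℝ) :
    IsIntermediateSpace d A B A B
      (fun u => ∀ i, Integrable (u i) (arcsineMeasure (A i) (B i))) (vecL1Norm d A B) where
  nrm_nonneg := vecL1Norm_nonneg d A B
  add_mem u v hu hv i := (hu i).add (hv i)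
  integrable u hu := hu
  exists_vecL1Norm_le := ⟨1, zero_le_one, fun u _ => (one_mul _).ge⟩
  re_mem r hr F hF i := integrable_arcsineMeasure_of_continuousOn
    (contDiffOn_re_of_differentiableOn_thickening hr (hF i)).continuousOn
  exists_nrm_re_le r hr := ⟨∑ i, (arcsineMeasure (A i) (B i)).real univ, by positivity,
    fun F M _ hM => vecL1Norm_le_of_forall_abs_le fun i x =>
      abs_re_le_of_norm_le_thickening hr (hM i)⟩

lemma vecL1Norm_le_vecCNorm (hsub : ∀ i, Icc (A' i) (B' i) ⊆ Icc (A i) (B i))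
    {u : Fin d → ℝ → ℝ} (hu : memVecC d A B u) :
    vecL1Norm d A' B' u ≤
      (∑ i, (arcsineMeasure (A' i) (B' i)).real univ) * vecCNorm d A B u :=
  vecL1Norm_le_of_forall_abs_le fun i _ hx => (le_supIcc (hu i) (hsub i hx)).trans
    (Finset.single_le_sum (f := fun i => supIcc (A i) (B i) (u i))
      (fun _ _ => supIcc_nonneg _ _ _) (Finset.mem_univ i))

lemma isIntermediateSpace_memVecC (hAB : ∀ i, A i ≤ B i)
    (hsub : ∀ i, Icc (A' i) (B' i) ⊆ Icc (A i) (B i)) :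
    IsIntermediateSpace d A' B' A B (memVecC d A B) (vecCNorm d A B) where
  nrm_nonneg u := Finset.sum_nonneg fun i _ => supIcc_nonneg _ _ _
  add_mem u v hu hv i := (hu i).add (hv i)
  integrable u hu i := integrable_arcsineMeasure_of_continuousOn ((hu i).mono (hsub i))
  exists_vecL1Norm_le := ⟨∑ i, (arcsineMeasure (A' i) (B' i)).real univ, by positivity,
    fun _ => vecL1Norm_le_vecCNorm hsub⟩
  re_mem r hr F hF i :=
    (contDiffOn_re_of_differentiableOn_thickening hr (hF i)).continuousOn
  exists_nrm_re_le r hr := by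
    refine ⟨d, by positivity, fun F M _ hM => (Finset.sum_le_card_nsmul _ _ M fun i _ =>
      supIcc_le (hAB i) fun x => abs_re_le_of_norm_le_thickening hr (hM i)).trans_eq ?_⟩
    rw [Finset.card_univ, Fintype.card_fin, nsmul_eq_mul]

lemma vecCNorm_le_vecC1Norm (d : ℕ) (A B : Fin d → ℝ) (u : Fin d → ℝ → ℝ) :
    vecCNorm d A B u ≤ vecC1Norm d A B u :=
  Finset.sum_le_sum fun _ _ => le_add_of_nonneg_right (supIcc_nonneg _ _ _)

lemma isIntermediateSpace_memVecC1 (hAB : ∀ i, A i < B i)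
    (hsub : ∀ i, Icc (A' i) (B' i) ⊆ Icc (A i) (B i)) :
    IsIntermediateSpace d A' B' A B (memVecC1 d A B) (vecC1Norm d A B) where
  nrm_nonneg u := Finset.sum_nonneg fun i _ =>
    add_nonneg (supIcc_nonneg _ _ _) (supIcc_nonneg _ _ _)
  add_mem u v hu hv i := (hu i).add (hv i)
  integrable u hu i :=
    integrable_arcsineMeasure_of_continuousOn ((hu i).continuousOn.mono (hsub i))
  exists_vecL1Norm_le := ⟨∑ i, (arcsineMeasure (A' i) (B' i)).real univ, by positivity,
    fun u hu => (vecL1Norm_le_vecCNorm hsub fun i => (hu i).continuousOn).trans <| by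
      gcongr
      exact vecCNorm_le_vecC1Norm d A B u⟩
  re_mem r hr F hF i := contDiffOn_re_of_differentiableOn_thickening hr (hF i)
  exists_nrm_re_le r hr := by
    refine ⟨d * (1 + 1 / (r / 2)), by positivity, fun F M hF hM =>
      (Finset.sum_le_card_nsmul _ _ (M + M / (r / 2)) fun i _ => add_le_add
        (supIcc_le (hAB i).le fun x => abs_re_le_of_norm_le_thickening hr (hM i))
        (supIcc_le (hAB i).le fun x =>
          abs_derivWithin_re_le_of_norm_le_thickening (hAB i) hr (hF i) (hM i))).trans_eq ?_⟩
    rw [Finset.card_univ, Fintype.card_fin, nsmul_eq_mul]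
    ring

end Spaces

theorem exists_unique_ae_eq_calH_add {d : ℕ} {A B : Fin d → ℝ} (hAB : ∀ i, A i < B i)
    (hdisj : ∀ i j, i ≠ j → Disjoint (Icc (A i) (B i)) (Icc (A j) (B j))) (a : Fin d → ℝ → ℝ)
    (ha : ∀ i, Integrable (a i) (arcsineMeasure (A i) (B i))) :
    ∃ u : Fin d → ℝ → ℝ, (∀ i, Integrable (u i) (arcsineMeasure (A i) (B i))) ∧
      (∀ i, ∀ᵐ x ∂(arcsineMeasure (A i) (B i)), u i x = calH d A B u i x + a i x) ∧
      ∀ u' : Fin d → ℝ → ℝ, (∀ i, Integrable (u' i) (arcsineMeasure (A i) (B i))) →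
        (∀ i, ∀ᵐ x ∂(arcsineMeasure (A i) (B i)), u' i x = calH d A B u' i x + a i x) →
        ∀ i, ∀ᵐ x ∂(arcsineMeasure (A i) (B i)), u' i x = u i x := by
  obtain ⟨u, hu_int, hu⟩ := exists_eq_calH_add hAB hdisj ha
  refine ⟨u, hu_int, fun i => Eventually.of_forall (hu i), fun u' hu'_int hu' i => ?_⟩
  filter_upwards [hu' i, ae_mem_Icc_arcsineMeasure (A i) (B i)] with x hu'x hx
  rw [hu'x, hu i x, calH_eq_calH_of_ae_eq hAB hdisj hu'_int hu_int hu'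
    (fun k => Eventually.of_forall (hu k)) fun _ => notMem_Icc_of_disjoint hdisj hx]

/-- Lemma 3.6: `ℋ_{Δ⃗}` is a bounded compact linear operator on each of
`L¹(ω_{Δ⃗})`, `C(Δ⃗)`, `C¹(Δ⃗)` and `I − ℋ_{Δ⃗}` is invertible there; similarly for
`ℋ_{Δ⃗*,Δ⃗}` on `C(Δ⃗)` and `C¹(Δ⃗)`. -/
theorem calH_bounded_compact_invertible
    (d : ℕ) (A B : Fin d → ℝ) (hAB : ∀ i, A i < B i)
    (hdisj : ∀ i j, i ≠ j → Disjoint (Set.Icc (A i) (B i)) (Set.Icc (A j) (B j))) :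
    -- `L¹(ω_{Δ⃗})` version of boundedness, compactness and invertibility for `ℋ_{Δ⃗}`
    ((∃ M : ℝ, ∀ u : Fin d → ℝ → ℝ,
        (∀ i, Integrable (u i) (arcsineMeasure (A i) (B i))) →
        (∑ i, ∫ x, |calH d A B u i x| ∂(arcsineMeasure (A i) (B i))) ≤
          M * ∑ i, ∫ x, |u i x| ∂(arcsineMeasure (A i) (B i))) ∧
      (∀ u : ℕ → Fin d → ℝ → ℝ,
        (∀ n i, Integrable (u n i) (arcsineMeasure (A i) (B i))) →
        (∀ n, (∑ i, ∫ x, |u n i x| ∂(arcsineMeasure (A i) (B i))) ≤ 1) →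
        ∃ φ : ℕ → ℕ, StrictMono φ ∧ ∃ v : Fin d → ℝ → ℝ,
          (∀ i, Integrable (v i) (arcsineMeasure (A i) (B i))) ∧
          Tendsto (fun n => ∑ i, ∫ x, |calH d A B (u (φ n)) i x - v i x|
            ∂(arcsineMeasure (A i) (B i))) atTop (𝓝 0)) ∧
      (∀ a : Fin d → ℝ → ℝ,
        (∀ i, Integrable (a i) (arcsineMeasure (A i) (B i))) →
        ∃ u : Fin d → ℝ → ℝ,
          (∀ i, Integrable (u i) (arcsineMeasure (A i) (B i))) ∧
          (∀ i, ∀ᵐ x ∂(arcsineMeasure (A i) (B i)), u i x = calH d A B u i x + a i x) ∧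
          ∀ u' : Fin d → ℝ → ℝ,
            (∀ i, Integrable (u' i) (arcsineMeasure (A i) (B i))) →
            (∀ i, ∀ᵐ x ∂(arcsineMeasure (A i) (B i)), u' i x = calH d A B u' i x + a i x) →
            ∀ i, ∀ᵐ x ∂(arcsineMeasure (A i) (B i)), u' i x = u i x)) ∧
    -- `C(Δ⃗)` and `C¹(Δ⃗)` versions for `ℋ_{Δ⃗}`
    OpGoodOn d A B A B (memVecC d A B) (vecCNorm d A B) ∧
    OpGoodOn d A B A B (memVecC1 d A B) (vecC1Norm d A B) ∧
    -- `C(Δ⃗)` and `C¹(Δ⃗)` versions for `ℋ_{Δ⃗*,Δ⃗}` with `Δ*_i ⊆ Δ_i`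
    (∀ Astar Bstar : Fin d → ℝ,
      (∀ i, A i ≤ Astar i ∧ Astar i < Bstar i ∧ Bstar i ≤ B i) →
      OpGoodOn d Astar Bstar A B (memVecC d A B) (vecCNorm d A B) ∧
      OpGoodOn d Astar Bstar A B (memVecC1 d A B) (vecC1Norm d A B)) := by
  have hAB' : ∀ i, A i ≤ B i := fun i => (hAB i).le
  have hdisj' : ∀ i j, j ≠ i → Disjoint (Icc (A i) (B i)) (Icc (A j) (B j)) := fun i j hj =>
    hdisj i j hj.symm
  have hL1 := isIntermediateSpace_integrable d A B
  have hsub : ∀ Astar Bstar : Fin d → ℝ,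
      (∀ i, A i ≤ Astar i ∧ Astar i < Bstar i ∧ Bstar i ≤ B i) →
      ∀ i, Icc (Astar i) (Bstar i) ⊆ Icc (A i) (B i) := fun _ _ hst i =>
    Icc_subset_Icc (hst i).1 (hst i).2.2
  refine ⟨⟨hL1.exists_nrm_calH_le hAB' hdisj', hL1.exists_subseq_tendsto_calH hAB' hdisj',
    exists_unique_ae_eq_calH_add hAB hdisj⟩, ?_, ?_, fun Astar Bstar hst => ⟨?_, ?_⟩⟩
  · exact (isIntermediateSpace_memVecC hAB' fun _ => subset_rfl).opGoodOn hAB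
      (fun _ => subset_rfl) hdisj
  · exact (isIntermediateSpace_memVecC1 hAB fun _ => subset_rfl).opGoodOn hAB
      (fun _ => subset_rfl) hdisj
  · exact (isIntermediateSpace_memVecC hAB' (hsub _ _ hst)).opGoodOn (fun i => (hst i).2.1)
      (hsub _ _ hst) hdisj
  · exact (isIntermediateSpace_memVecC1 hAB (hsub _ _ hst)).opGoodOn (fun i => (hst i).2.1)
      (hsub _ _ hst) hdisj

end
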